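/- Let a > 0 with a ≠ 1, let n ≥ 2 be an integer, and let s > a/4. Then there exists a constant C > 0, independent of f, such that for every radial function f ∈ C_c^∞(ℝⁿ \ {0}) one has ‖S^a f‖_{L²(ℝⁿ, L^∞(B))} ≤ C ‖f‖_{H^s(ℝⁿ)}. -/

import Mathlib

open MeasureTheory Real
open scoped InnerProductSpace

noncomputable section

/-- The Fourier transform `f̂(ξ) = ∫ e^{-i x·ξ} f(x) dx` on `ℝⁿ`. -/
def FT (n : ℕ) (f : EuclideanSpace ℝ (Fin n) → ℂ) (ξ : EuclideanSpace ℝ (Fin n)) : ℂ :=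
  ∫ x, Complex.exp (-(Complex.I * ((⟪x, ξ⟫_ℝ : ℝ) : ℂ))) * f x

/-- The oscillatory integral `S^a f(x,t) = (2π)^{-n} ∫ e^{i(x·ξ + t|ξ|^a)} f̂(ξ) dξ`. -/
def Sosc (n : ℕ) (a : ℝ) (f : EuclideanSpace ℝ (Fin n) → ℂ)
    (x : EuclideanSpace ℝ (Fin n)) (t : ℝ) : ℂ :=
  (((2 * π) ^ n : ℝ) : ℂ)⁻¹ *
    ∫ ξ, Complex.exp (Complex.I * ((⟪x, ξ⟫_ℝ + t * ‖ξ‖ ^ a : ℝ) : ℂ)) * FT n f ξ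

open scoped ENNReal NNReal

/-!
Radial functions on `ℝ ^ (m + 2)` stay radial under `FT` and `Sosc`, so polar coordinates turn the
operator into a half-line integral against the Bessel-type kernel `besselIntegral m 0 (r * ρ)`.
That kernel, multiplied by `(r * ρ) ^ ((m + 1) / 2)`, is a combination of `exp (± i r ρ)` up to an
error `O(min 1 (1 / (r ρ)))`. The error is handled by a Hardy inequality, and what remains is a
maximal estimate for the one-dimensional oscillatory integrals
`∫ exp (i (r ρ + t ρ ^ a)) G ρ dρ` in `L²(dr)`.

For the frequencies `ρ ≤ 1` the maximum over `t` costs one derivative in `t`, which is bounded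
there. A dyadic piece `ρ ~ 2 ^ k` is rescaled to `ρ ~ 1` with times `|t| ≤ 2 ^ (a k)`. Linearizing
the maximum over a unit-spaced grid of `r` and applying Selberg's almost-orthogonality inequality
reduces its bound to `ℓ¹` bounds for the kernel `∫ exp (i (y ρ + t ρ ^ a)) w ρ dρ`. Since `a ≠ 1`,
van der Corput's lemma bounds this by `|t| ^ (-1 / 2)`, while integration by parts gives decay in
`y` once `|y|` dominates `|t|`. Hence the sum over `|y| ≲ 2 ^ (a k)` is at most
`2 ^ (a k / 2)`: a loss of `2 ^ (a k / 4)` in norm, summable against `2 ^ (- s k)` as `s > a / 4`.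
-/

section OscillatoryIntegrals

open Set

variable {α β : ℝ} {φ φ₁ φ₂ φ₃ w w₁ w₂ : ℝ → ℝ}

lemma hasDerivAt_exp_I_mul {φ' x : ℝ} (h : HasDerivAt φ φ' x) :
    HasDerivAt (fun y => Complex.exp (Complex.I * (φ y : ℂ)))
      (Complex.exp (Complex.I * (φ x : ℂ)) * (Complex.I * (φ' : ℂ))) x :=
  (h.ofReal_comp.const_mul Complex.I).cexp

lemma integral_exp_I_mul_deriv_mul {u u' : ℝ → ℂ}
    (hφ : ∀ x ∈ uIcc α β, HasDerivAt φ (φ₁ x) x) (hφ₁ : ContinuousOn φ₁ (uIcc α β))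
    (hu : ∀ x ∈ uIcc α β, HasDerivAt u (u' x) x) (hu' : ContinuousOn u' (uIcc α β)) :
    ∫ x in α..β, Complex.exp (Complex.I * (φ x : ℂ)) * ((φ₁ x : ℂ) * u x) =
      -Complex.I * (Complex.exp (Complex.I * (φ β : ℂ)) * u β
        - Complex.exp (Complex.I * (φ α : ℂ)) * u α
        - ∫ x in α..β, Complex.exp (Complex.I * (φ x : ℂ)) * u' x) := by
  have he : ∀ x ∈ uIcc α β, HasDerivAt (fun y => Complex.exp (Complex.I * (φ y : ℂ)))
      (Complex.exp (Complex.I * (φ x : ℂ)) * (Complex.I * (φ₁ x : ℂ))) x :=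
    fun x hx => hasDerivAt_exp_I_mul (hφ x hx)
  have he' : ContinuousOn
      (fun x => Complex.exp (Complex.I * (φ x : ℂ)) * (Complex.I * (φ₁ x : ℂ))) (uIcc α β) :=
    (HasDerivAt.continuousOn he).mul (by fun_prop)
  rw [intervalIntegral.integral_mul_deriv_eq_deriv_mul he hu he'.intervalIntegrable
    hu'.intervalIntegrable, sub_sub_cancel, ← intervalIntegral.integral_const_mul]
  refine intervalIntegral.integral_congr fun x _ => ?_
  linear_combination (Complex.exp (Complex.I * (φ x : ℂ)) * φ₁ x * u x) * Complex.I_sq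

lemma norm_integral_exp_I_mul_deriv_mul_le {u u' : ℝ → ℂ} (hαβ : α ≤ β)
    (hφ : ∀ x ∈ uIcc α β, HasDerivAt φ (φ₁ x) x) (hφ₁ : ContinuousOn φ₁ (uIcc α β))
    (hu : ∀ x ∈ uIcc α β, HasDerivAt u (u' x) x) (hu' : ContinuousOn u' (uIcc α β)) :
    ‖∫ x in α..β, Complex.exp (Complex.I * (φ x : ℂ)) * ((φ₁ x : ℂ) * u x)‖
      ≤ ‖u β‖ + ‖u α‖ + ∫ x in α..β, ‖u' x‖ := by
  rw [integral_exp_I_mul_deriv_mul hφ hφ₁ hu hu', norm_mul, norm_neg, Complex.norm_I, one_mul]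
  refine (norm_sub_le _ _).trans (add_le_add ((norm_sub_le _ _).trans_eq ?_) ?_)
  · simp only [norm_mul, Complex.norm_exp_I_mul_ofReal, one_mul]
  · refine (intervalIntegral.norm_integral_le_integral_norm hαβ).trans_eq ?_
    simp only [norm_mul, Complex.norm_exp_I_mul_ofReal, one_mul]

/-! ### The second derivative test -/

variable {lam : ℝ}

lemma abs_div_sq_add_le (hlam : 0 < lam) (p : ℝ) : |p / (p ^ 2 + lam)| ≤ 1 / (2 * √lam) := by
  have hd : 0 < p ^ 2 + lam := by positivity
  rw [abs_div, abs_of_pos hd, div_le_div_iff₀ hd (by positivity)]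
  nlinarith [sq_nonneg (|p| - √lam), Real.sq_sqrt hlam.le, sq_abs p]

lemma abs_mul_sub_div_sq_add_sq_le (hlam : 0 < lam) (p : ℝ) {q : ℝ} (hq : 0 ≤ q) :
    |q * (lam - p ^ 2) / (p ^ 2 + lam) ^ 2| ≤ q / (p ^ 2 + lam) := by
  have hd : 0 < p ^ 2 + lam := by positivity
  have hsub : |lam - p ^ 2| ≤ p ^ 2 + lam := by
    rw [abs_le]; constructor <;> nlinarith [sq_nonneg p]
  rw [abs_div, abs_mul, abs_of_nonneg hq, abs_of_pos (pow_pos hd 2)]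
  calc q * |lam - p ^ 2| / (p ^ 2 + lam) ^ 2
      ≤ q * (p ^ 2 + lam) / (p ^ 2 + lam) ^ 2 := by gcongr
    _ = q / (p ^ 2 + lam) := by field_simp

lemma hasDerivAt_div_sq_add (hlam : 0 < lam) {p : ℝ → ℝ} {p' x : ℝ} (hp : HasDerivAt p p' x) :
    HasDerivAt (fun y => p y / (p y ^ 2 + lam))
      (p' * (lam - p x ^ 2) / (p x ^ 2 + lam) ^ 2) x := by
  convert! hp.div ((hp.pow 2).add_const lam) (by positivity : p x ^ 2 + lam ≠ 0) using 1
  simp only [Pi.pow_apply]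
  push_cast
  ring

lemma hasDerivAt_arctan_div_sqrt (hlam : 0 < lam) {p : ℝ → ℝ} {p' x : ℝ}
    (hp : HasDerivAt p p' x) :
    HasDerivAt (fun y => Real.arctan (p y / √lam) / √lam) (p' / (p x ^ 2 + lam)) x := by
  convert! ((hp.div_const √lam).arctan).div_const √lam using 1
  have hsq : √lam ^ 2 = lam := Real.sq_sqrt hlam.le
  have hden : (1 + (p x / √lam) ^ 2) * lam = p x ^ 2 + lam := by
    rw [div_pow, hsq]; field_simp; ring
  rw [← hden]
  field_simp
  rw [hsq]

lemma integral_deriv_div_sq_add_le (hlam : 0 < lam) {p p' : ℝ → ℝ}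
    (hp : ∀ x ∈ uIcc α β, HasDerivAt p (p' x) x) (hp' : ContinuousOn p' (uIcc α β)) :
    ∫ x in α..β, p' x / (p x ^ 2 + lam) ≤ π / √lam := by
  have hcont : ContinuousOn (fun x => p' x / (p x ^ 2 + lam)) (uIcc α β) :=
    hp'.div (((HasDerivAt.continuousOn hp).pow 2).add continuousOn_const)
      fun x _ => by positivity
  rw [intervalIntegral.integral_eq_sub_of_hasDerivAt
    (fun x hx => hasDerivAt_arctan_div_sqrt hlam (hp x hx)) hcont.intervalIntegrable, ← sub_div]
  gcongr
  linarith [Real.arctan_lt_pi_div_two (p β / √lam), Real.neg_pi_div_two_lt_arctan (p α / √lam)]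

lemma norm_integral_resonant_le {M : ℝ} (hαβ : α ≤ β) (hlam : 0 < lam)
    (hφ₁ : ∀ x ∈ uIcc α β, HasDerivAt φ₁ (φ₂ x) x) (hφ₂ : ContinuousOn φ₂ (uIcc α β))
    (hlow : ∀ x ∈ uIcc α β, lam ≤ φ₂ x) (hM : ∀ x ∈ uIcc α β, |w x| ≤ M) :
    ‖∫ x in α..β, Complex.exp (Complex.I * (φ x : ℂ)) *
        ((w x * (lam / (φ₁ x ^ 2 + lam)) : ℝ) : ℂ)‖ ≤ π * M / √lam := by
  have hM0 : 0 ≤ M := (abs_nonneg _).trans (hM α left_mem_uIcc)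
  have hψ : ContinuousOn (fun x => φ₂ x / (φ₁ x ^ 2 + lam)) (uIcc α β) :=
    hφ₂.div (((HasDerivAt.continuousOn hφ₁).pow 2).add continuousOn_const)
      fun x _ => by positivity
  calc ‖∫ x in α..β, Complex.exp (Complex.I * (φ x : ℂ)) *
        ((w x * (lam / (φ₁ x ^ 2 + lam)) : ℝ) : ℂ)‖
      ≤ ∫ x in α..β, M * (φ₂ x / (φ₁ x ^ 2 + lam)) := by
        refine intervalIntegral.norm_integral_le_of_norm_le hαβ
          (Filter.Eventually.of_forall fun x hx => ?_) (hψ.intervalIntegrable.const_mul M)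
        have hx' : x ∈ uIcc α β := uIoc_subset_uIcc (uIoc_of_le hαβ ▸ hx)
        rw [norm_mul, Complex.norm_exp_I_mul_ofReal, one_mul, Complex.norm_real,
          Real.norm_eq_abs, abs_mul, abs_of_nonneg (a := lam / _) (by positivity)]
        gcongr
        exacts [hM x hx', hlow x hx']
    _ = M * ∫ x in α..β, φ₂ x / (φ₁ x ^ 2 + lam) := intervalIntegral.integral_const_mul _ _
    _ ≤ M * (π / √lam) := by gcongr; exact integral_deriv_div_sq_add_le hlam hφ₁ hφ₂
    _ = π * M / √lam := by ring

lemma continuousOn_deriv_mul_div_sq_add (hlam : 0 < lam)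
    (hφ₁ : ContinuousOn φ₁ (uIcc α β)) (hφ₂ : ContinuousOn φ₂ (uIcc α β))
    (hw : ContinuousOn w (uIcc α β)) (hw₁ : ContinuousOn w₁ (uIcc α β)) :
    ContinuousOn (fun x => w₁ x * (φ₁ x / (φ₁ x ^ 2 + lam))
      + w x * (φ₂ x * (lam - φ₁ x ^ 2) / (φ₁ x ^ 2 + lam) ^ 2)) (uIcc α β) := by
  have hdc : ContinuousOn (fun x => φ₁ x ^ 2 + lam) (uIcc α β) := (hφ₁.pow 2).add (by fun_prop)
  have hd : ∀ x ∈ uIcc α β, φ₁ x ^ 2 + lam ≠ 0 := fun x _ => by positivity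
  exact (hw₁.mul (hφ₁.div hdc hd)).add (hw.mul ((hφ₂.mul (continuousOn_const.sub
    (hφ₁.pow 2))).div (hdc.pow 2) fun x hx => pow_ne_zero 2 (hd x hx)))

lemma integral_abs_deriv_mul_div_sq_add_le {M M₁ : ℝ} (hαβ : α ≤ β) (hlam : 0 < lam)
    (hφ₁ : ∀ x ∈ uIcc α β, HasDerivAt φ₁ (φ₂ x) x) (hφ₂ : ContinuousOn φ₂ (uIcc α β))
    (hnonneg : ∀ x ∈ uIcc α β, 0 ≤ φ₂ x)
    (hw : ContinuousOn w (uIcc α β)) (hw₁ : ContinuousOn w₁ (uIcc α β))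
    (hM : ∀ x ∈ uIcc α β, |w x| ≤ M) (hM₁ : ∀ x ∈ uIcc α β, |w₁ x| ≤ M₁) :
    ∫ x in α..β, |w₁ x * (φ₁ x / (φ₁ x ^ 2 + lam))
        + w x * (φ₂ x * (lam - φ₁ x ^ 2) / (φ₁ x ^ 2 + lam) ^ 2)|
      ≤ (π * M + M₁ * (β - α) / 2) / √lam := by
  have hM0 : 0 ≤ M := (abs_nonneg _).trans (hM α left_mem_uIcc)
  have hM₁0 : 0 ≤ M₁ := (abs_nonneg _).trans (hM₁ α left_mem_uIcc)
  have hφ₁c : ContinuousOn φ₁ (uIcc α β) := HasDerivAt.continuousOn hφ₁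
  set ψ : ℝ → ℝ := fun x => φ₂ x / (φ₁ x ^ 2 + lam)
  have hd : ∀ x ∈ uIcc α β, φ₁ x ^ 2 + lam ≠ 0 := fun x _ => by positivity
  have hψ : IntervalIntegrable ψ volume α β :=
    (hφ₂.div ((hφ₁c.pow 2).add continuousOn_const) hd).intervalIntegrable
  calc _ ≤ ∫ x in α..β, (M₁ * (1 / (2 * √lam)) + M * ψ x) := by
        refine intervalIntegral.integral_mono_on hαβ
          (continuousOn_deriv_mul_div_sq_add hlam hφ₁c hφ₂ hw hw₁).abs.intervalIntegrable
          (intervalIntegrable_const.add (hψ.const_mul M)) fun x hx => ?_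
        rw [← uIcc_of_le hαβ] at hx
        refine (abs_add_le _ _).trans ?_
        rw [abs_mul, abs_mul]
        exact add_le_add
          (mul_le_mul (hM₁ x hx) (abs_div_sq_add_le hlam _) (abs_nonneg _) hM₁0)
          (mul_le_mul (hM x hx) (abs_mul_sub_div_sq_add_sq_le hlam _ (hnonneg x hx))
            (abs_nonneg _) hM0)
    _ = M₁ * (1 / (2 * √lam)) * (β - α) + M * ∫ x in α..β, ψ x := by
        rw [intervalIntegral.integral_add intervalIntegrable_const (hψ.const_mul M),
          intervalIntegral.integral_const, intervalIntegral.integral_const_mul, smul_eq_mul,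
          mul_comm (β - α)]
    _ ≤ M₁ * (1 / (2 * √lam)) * (β - α) + M * (π / √lam) := by
        gcongr; exact integral_deriv_div_sq_add_le hlam hφ₁ hφ₂
    _ = (π * M + M₁ * (β - α) / 2) / √lam := by field_simp; ring

lemma norm_integral_nonresonant_le {M M₁ : ℝ} (hαβ : α ≤ β) (hlam : 0 < lam)
    (hφ : ∀ x ∈ uIcc α β, HasDerivAt φ (φ₁ x) x) (hφ₁ : ∀ x ∈ uIcc α β, HasDerivAt φ₁ (φ₂ x) x)
    (hφ₂ : ContinuousOn φ₂ (uIcc α β)) (hnonneg : ∀ x ∈ uIcc α β, 0 ≤ φ₂ x)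
    (hw : ∀ x ∈ uIcc α β, HasDerivAt w (w₁ x) x) (hw₁ : ContinuousOn w₁ (uIcc α β))
    (hM : ∀ x ∈ uIcc α β, |w x| ≤ M) (hM₁ : ∀ x ∈ uIcc α β, |w₁ x| ≤ M₁) :
    ‖∫ x in α..β, Complex.exp (Complex.I * (φ x : ℂ)) *
        ((φ₁ x : ℂ) * ((w x * (φ₁ x / (φ₁ x ^ 2 + lam)) : ℝ) : ℂ))‖
      ≤ ((1 + π) * M + M₁ * (β - α) / 2) / √lam := by
  have hφ₁c : ContinuousOn φ₁ (uIcc α β) := HasDerivAt.continuousOn hφ₁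
  have hwc : ContinuousOn w (uIcc α β) := HasDerivAt.continuousOn hw
  have hend : ∀ x ∈ uIcc α β, ‖((w x * (φ₁ x / (φ₁ x ^ 2 + lam)) : ℝ) : ℂ)‖
      ≤ M * (1 / (2 * √lam)) := by
    intro x hx
    rw [Complex.norm_real, Real.norm_eq_abs, abs_mul]
    exact mul_le_mul (hM x hx) (abs_div_sq_add_le hlam _) (abs_nonneg _)
      ((abs_nonneg _).trans (hM x hx))
  refine (norm_integral_exp_I_mul_deriv_mul_le hαβ hφ hφ₁c (fun x hx => ((hw x hx).mul
    (hasDerivAt_div_sq_add hlam (hφ₁ x hx))).ofReal_comp)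
    (Complex.continuous_ofReal.comp_continuousOn
      (continuousOn_deriv_mul_div_sq_add hlam hφ₁c hφ₂ hwc hw₁))).trans ?_
  simp only [Complex.norm_real (r := _ + _), Real.norm_eq_abs (_ + _)]
  refine (add_le_add (add_le_add (hend β right_mem_uIcc) (hend α left_mem_uIcc))
    (integral_abs_deriv_mul_div_sq_add_le hαβ hlam hφ₁ hφ₂ hnonneg hwc hw₁ hM hM₁)).trans_eq ?_
  field_simp
  ring

-- The amplitude is split as `w = φ' (w φ' / (φ'² + λ)) + λ w / (φ'² + λ)`: the first part is
-- integrated by parts, and the second is concentrated at the stationary point.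
theorem norm_integral_exp_I_mul_le_of_le_second_deriv {M M₁ : ℝ} (hαβ : α ≤ β) (hlam : 0 < lam)
    (hφ : ∀ x ∈ uIcc α β, HasDerivAt φ (φ₁ x) x) (hφ₁ : ∀ x ∈ uIcc α β, HasDerivAt φ₁ (φ₂ x) x)
    (hφ₂ : ContinuousOn φ₂ (uIcc α β)) (hlow : ∀ x ∈ uIcc α β, lam ≤ φ₂ x)
    (hw : ∀ x ∈ uIcc α β, HasDerivAt w (w₁ x) x) (hw₁ : ContinuousOn w₁ (uIcc α β))
    (hM : ∀ x ∈ uIcc α β, |w x| ≤ M) (hM₁ : ∀ x ∈ uIcc α β, |w₁ x| ≤ M₁) :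
    ‖∫ x in α..β, Complex.exp (Complex.I * (φ x : ℂ)) * (w x : ℂ)‖
      ≤ ((1 + 2 * π) * M + M₁ * (β - α) / 2) / √lam := by
  have hφ₁c : ContinuousOn φ₁ (uIcc α β) := HasDerivAt.continuousOn hφ₁
  have hwc : ContinuousOn w (uIcc α β) := HasDerivAt.continuousOn hw
  have hdc : ContinuousOn (fun x => φ₁ x ^ 2 + lam) (uIcc α β) := (hφ₁c.pow 2).add (by fun_prop)
  have hd : ∀ x ∈ uIcc α β, φ₁ x ^ 2 + lam ≠ 0 := fun x _ => by positivity
  have hec : ContinuousOn (fun x => Complex.exp (Complex.I * (φ x : ℂ))) (uIcc α β) :=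
    HasDerivAt.continuousOn fun x hx => hasDerivAt_exp_I_mul (hφ x hx)
  have hgc : ContinuousOn (fun x => w x * (φ₁ x / (φ₁ x ^ 2 + lam))) (uIcc α β) :=
    hwc.mul (hφ₁c.div hdc hd)
  have hrc : ContinuousOn (fun x => w x * (lam / (φ₁ x ^ 2 + lam))) (uIcc α β) :=
    hwc.mul (continuousOn_const.div hdc hd)
  have hsplit : ∀ x ∈ uIcc α β, Complex.exp (Complex.I * (φ x : ℂ)) * (w x : ℂ) =
      Complex.exp (Complex.I * (φ x : ℂ)) *
        ((φ₁ x : ℂ) * ((w x * (φ₁ x / (φ₁ x ^ 2 + lam)) : ℝ) : ℂ)) +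
      Complex.exp (Complex.I * (φ x : ℂ)) * ((w x * (lam / (φ₁ x ^ 2 + lam)) : ℝ) : ℂ) := by
    intro x hx
    rw [← mul_add, ← Complex.ofReal_mul, ← Complex.ofReal_add]
    congr 2
    have := hd x hx
    field_simp
  have hgi : IntervalIntegrable (fun x => Complex.exp (Complex.I * (φ x : ℂ)) *
      ((φ₁ x : ℂ) * ((w x * (φ₁ x / (φ₁ x ^ 2 + lam)) : ℝ) : ℂ))) volume α β :=
    (hec.mul ((Complex.continuous_ofReal.comp_continuousOn hφ₁c).mul
      (Complex.continuous_ofReal.comp_continuousOn hgc))).intervalIntegrable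
  have hri : IntervalIntegrable (fun x => Complex.exp (Complex.I * (φ x : ℂ)) *
      ((w x * (lam / (φ₁ x ^ 2 + lam)) : ℝ) : ℂ)) volume α β :=
    (hec.mul (Complex.continuous_ofReal.comp_continuousOn hrc)).intervalIntegrable
  rw [intervalIntegral.integral_congr hsplit, intervalIntegral.integral_add hgi hri]
  refine (norm_add_le _ _).trans ((add_le_add
    (norm_integral_nonresonant_le hαβ hlam hφ hφ₁ hφ₂ (fun x hx => hlam.le.trans (hlow x hx))
      hw hw₁ hM hM₁)
    (norm_integral_resonant_le hαβ hlam hφ₁ hφ₂ hlow hM)).trans_eq ?_)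
  ring

/-! ### Non-stationary phase -/

lemma abs_deriv_div_numerator_le {M B p q v v' : ℝ} (hv : |v| ≤ M) (hv' : |v'| ≤ M)
    (hq : |q| ≤ B * |p|) : |v' * p - v * q| ≤ M * (1 + B) * |p| := by
  have hM : 0 ≤ M := (abs_nonneg v).trans hv
  calc |v' * p - v * q| ≤ |v'| * |p| + |v| * |q| := by
        rw [← abs_mul, ← abs_mul]; exact abs_sub _ _
    _ ≤ M * |p| + M * (B * |p|) := by gcongr
    _ = M * (1 + B) * |p| := by ring

lemma hasDerivAt_div_cube {f g : ℝ → ℝ} {f' g' x : ℝ} (h0 : f x ≠ 0) (hf : HasDerivAt f f' x)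
    (hg : HasDerivAt g g' x) :
    HasDerivAt (fun x => g x / f x ^ 3) (g' / f x ^ 3 - 3 * f' * g x / f x ^ 4) x := by
  refine (hg.div (hf.fun_pow 3) (pow_ne_zero 3 h0)).congr_deriv ?_
  field_simp
  ring

lemma abs_div_cube_le {A n p : ℝ} (hlam : 0 < lam) (hp : lam ≤ |p|) (hn : |n| ≤ A * |p|) :
    |n / p ^ 3| ≤ A / lam ^ 2 := by
  have hp0 : 0 < |p| := hlam.trans_le hp
  have hA : 0 ≤ A := nonneg_of_mul_nonneg_left ((abs_nonneg n).trans hn) hp0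
  rw [abs_div, abs_pow]
  calc |n| / |p| ^ 3 ≤ A * |p| / |p| ^ 3 := by gcongr
    _ = A / |p| ^ 2 := by field_simp
    _ ≤ A / lam ^ 2 := by gcongr

lemma abs_div_cube_sub_div_pow_four_le {A B m n p q : ℝ} (hlam : 0 < lam) (hp : lam ≤ |p|)
    (hm : |m| ≤ A * |p|) (hn : |n| ≤ A * |p|) (hq : |q| ≤ B * |p|) :
    |m / p ^ 3 - 3 * q * n / p ^ 4| ≤ A * (1 + 3 * B) / lam ^ 2 := by
  have hp0 : 0 < |p| := hlam.trans_le hp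
  have hA : 0 ≤ A := nonneg_of_mul_nonneg_left ((abs_nonneg m).trans hm) hp0
  have hB : 0 ≤ B := nonneg_of_mul_nonneg_left ((abs_nonneg q).trans hq) hp0
  calc |m / p ^ 3 - 3 * q * n / p ^ 4| ≤ |m / p ^ 3| + |3 * q * n / p ^ 4| := abs_sub _ _
    _ = |m| / |p| ^ 3 + 3 * |q| * |n| / |p| ^ 4 := by
        rw [abs_div, abs_div, abs_mul, abs_mul, abs_pow, abs_pow, Nat.abs_ofNat]
    _ ≤ A * |p| / |p| ^ 3 + 3 * (B * |p|) * (A * |p|) / |p| ^ 4 := by gcongr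
    _ = A * (1 + 3 * B) / |p| ^ 2 := by field_simp
    _ ≤ A * (1 + 3 * B) / lam ^ 2 := by gcongr

lemma norm_integral_exp_I_mul_eq_of_boundary_zero (hφ : ∀ x ∈ uIcc α β, HasDerivAt φ (φ₁ x) x)
    (hφ₁ : ∀ x ∈ uIcc α β, HasDerivAt φ₁ (φ₂ x) x) (hφ₂ : ContinuousOn φ₂ (uIcc α β))
    (h0 : ∀ x ∈ uIcc α β, φ₁ x ≠ 0)
    (hw : ∀ x ∈ uIcc α β, HasDerivAt w (w₁ x) x) (hw₁ : ContinuousOn w₁ (uIcc α β))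
    (hwα : w α = 0) (hwβ : w β = 0) :
    ‖∫ x in α..β, Complex.exp (Complex.I * (φ x : ℂ)) * (w x : ℂ)‖ =
      ‖∫ x in α..β, Complex.exp (Complex.I * (φ x : ℂ)) *
        (((w₁ x * φ₁ x - w x * φ₂ x) / φ₁ x ^ 2 : ℝ) : ℂ)‖ := by
  have hφ₁c : ContinuousOn φ₁ (uIcc α β) := HasDerivAt.continuousOn hφ₁
  have hquot : ∀ x ∈ uIcc α β, HasDerivAt (fun x => ((w x / φ₁ x : ℝ) : ℂ))
      (((w₁ x * φ₁ x - w x * φ₂ x) / φ₁ x ^ 2 : ℝ) : ℂ) x := fun x hx =>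
    ((hw x hx).div (hφ₁ x hx) (h0 x hx)).ofReal_comp
  have hquot' : ContinuousOn (fun x => (((w₁ x * φ₁ x - w x * φ₂ x) / φ₁ x ^ 2 : ℝ) : ℂ))
      (uIcc α β) := Complex.continuous_ofReal.comp_continuousOn
    (((hw₁.mul hφ₁c).sub ((HasDerivAt.continuousOn hw).mul hφ₂)).div (hφ₁c.pow 2)
      fun x hx => pow_ne_zero 2 (h0 x hx))
  have hfactor : ∀ x ∈ uIcc α β, Complex.exp (Complex.I * (φ x : ℂ)) * (w x : ℂ) =
      Complex.exp (Complex.I * (φ x : ℂ)) * ((φ₁ x : ℂ) * ((w x / φ₁ x : ℝ) : ℂ)) := by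
    intro x hx
    rw [← Complex.ofReal_mul, mul_div_cancel₀ _ (h0 x hx)]
  rw [intervalIntegral.integral_congr hfactor,
    integral_exp_I_mul_deriv_mul hφ hφ₁c hquot hquot', hwα, hwβ]
  simp

lemma norm_integral_exp_I_mul_div_sq_le {A B : ℝ} {n n₁ : ℝ → ℝ} (hαβ : α ≤ β) (hlam : 0 < lam)
    (hφ : ∀ x ∈ uIcc α β, HasDerivAt φ (φ₁ x) x) (hφ₁ : ∀ x ∈ uIcc α β, HasDerivAt φ₁ (φ₂ x) x)
    (hφ₂ : ContinuousOn φ₂ (uIcc α β)) (hlow : ∀ x ∈ uIcc α β, lam ≤ |φ₁ x|)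
    (hB : ∀ x ∈ uIcc α β, |φ₂ x| ≤ B * |φ₁ x|) (hn : ∀ x ∈ uIcc α β, HasDerivAt n (n₁ x) x)
    (hn₁ : ContinuousOn n₁ (uIcc α β)) (hA : ∀ x ∈ uIcc α β, |n x| ≤ A * |φ₁ x|)
    (hA₁ : ∀ x ∈ uIcc α β, |n₁ x| ≤ A * |φ₁ x|) :
    ‖∫ x in α..β, Complex.exp (Complex.I * (φ x : ℂ)) * ((n x / φ₁ x ^ 2 : ℝ) : ℂ)‖
      ≤ A * (2 + (1 + 3 * B) * (β - α)) / lam ^ 2 := by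
  have h0 : ∀ x ∈ uIcc α β, φ₁ x ≠ 0 := fun x hx => abs_pos.1 (hlam.trans_le (hlow x hx))
  have hφ₁c : ContinuousOn φ₁ (uIcc α β) := HasDerivAt.continuousOn hφ₁
  set q : ℝ → ℝ := fun x => n x / φ₁ x ^ 3
  set q' : ℝ → ℝ := fun x => n₁ x / φ₁ x ^ 3 - 3 * φ₂ x * n x / φ₁ x ^ 4
  have hq : ∀ x ∈ uIcc α β, HasDerivAt (fun x => (q x : ℂ)) (q' x : ℂ) x := fun x hx =>
    (hasDerivAt_div_cube (h0 x hx) (hφ₁ x hx) (hn x hx)).ofReal_comp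
  have hq'c : ContinuousOn (fun x => (q' x : ℂ)) (uIcc α β) :=
    Complex.continuous_ofReal.comp_continuousOn
      ((hn₁.div (hφ₁c.pow 3) fun x hx => pow_ne_zero 3 (h0 x hx)).sub
        (((continuousOn_const.mul hφ₂).mul (HasDerivAt.continuousOn hn)).div (hφ₁c.pow 4)
          fun x hx => pow_ne_zero 4 (h0 x hx)))
  have hq_le : ∀ x ∈ uIcc α β, ‖(q x : ℂ)‖ ≤ A / lam ^ 2 := fun x hx => by
    rw [Complex.norm_real, Real.norm_eq_abs]
    exact abs_div_cube_le hlam (hlow x hx) (hA x hx)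
  have hq'_le : ∫ x in α..β, ‖(q' x : ℂ)‖ ≤ A * (1 + 3 * B) / lam ^ 2 * (β - α) := by
    refine (intervalIntegral.integral_mono_on hαβ hq'c.norm.intervalIntegrable
      intervalIntegrable_const fun x hx => ?_).trans_eq
      ((intervalIntegral.integral_const _).trans (mul_comm _ _))
    rw [← uIcc_of_le hαβ] at hx
    rw [Complex.norm_real, Real.norm_eq_abs]
    exact abs_div_cube_sub_div_pow_four_le hlam (hlow x hx) (hA₁ x hx) (hA x hx) (hB x hx)
  have hfactor : ∀ x ∈ uIcc α β, Complex.exp (Complex.I * (φ x : ℂ)) * ((n x / φ₁ x ^ 2 : ℝ) : ℂ)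
      = Complex.exp (Complex.I * (φ x : ℂ)) * ((φ₁ x : ℂ) * (q x : ℂ)) := fun x hx => by
    have := h0 x hx
    rw [← Complex.ofReal_mul]
    congr 2
    simp only [q]
    field_simp
  rw [intervalIntegral.integral_congr hfactor]
  refine (norm_integral_exp_I_mul_deriv_mul_le hαβ hφ hφ₁c hq hq'c).trans
    ((add_le_add (add_le_add (hq_le β right_mem_uIcc) (hq_le α left_mem_uIcc))
      hq'_le).trans_eq ?_)
  ring

-- Two integrations by parts; the boundary terms of the first one vanish.
theorem norm_integral_exp_I_mul_le_of_le_abs_deriv {B M : ℝ} (hαβ : α ≤ β) (hlam : 0 < lam)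
    (hφ : ∀ x ∈ uIcc α β, HasDerivAt φ (φ₁ x) x) (hφ₁ : ∀ x ∈ uIcc α β, HasDerivAt φ₁ (φ₂ x) x)
    (hφ₂ : ∀ x ∈ uIcc α β, HasDerivAt φ₂ (φ₃ x) x) (hφ₃ : ContinuousOn φ₃ (uIcc α β))
    (hlow : ∀ x ∈ uIcc α β, lam ≤ |φ₁ x|) (hB₂ : ∀ x ∈ uIcc α β, |φ₂ x| ≤ B * |φ₁ x|)
    (hB₃ : ∀ x ∈ uIcc α β, |φ₃ x| ≤ B * |φ₁ x|)
    (hw : ∀ x ∈ uIcc α β, HasDerivAt w (w₁ x) x) (hw₁ : ∀ x ∈ uIcc α β, HasDerivAt w₁ (w₂ x) x)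
    (hw₂ : ContinuousOn w₂ (uIcc α β)) (hwα : w α = 0) (hwβ : w β = 0)
    (hM : ∀ x ∈ uIcc α β, |w x| ≤ M) (hM₁ : ∀ x ∈ uIcc α β, |w₁ x| ≤ M)
    (hM₂ : ∀ x ∈ uIcc α β, |w₂ x| ≤ M) :
    ‖∫ x in α..β, Complex.exp (Complex.I * (φ x : ℂ)) * (w x : ℂ)‖
      ≤ M * (1 + B) * (2 + (1 + 3 * B) * (β - α)) / lam ^ 2 := by
  have h0 : ∀ x ∈ uIcc α β, φ₁ x ≠ 0 := fun x hx => abs_pos.1 (hlam.trans_le (hlow x hx))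
  have hφ₂c : ContinuousOn φ₂ (uIcc α β) := HasDerivAt.continuousOn hφ₂
  have hn : ∀ x ∈ uIcc α β, HasDerivAt (fun x => w₁ x * φ₁ x - w x * φ₂ x)
      (w₂ x * φ₁ x - w x * φ₃ x) x := fun x hx =>
    (((hw₁ x hx).mul (hφ₁ x hx)).sub ((hw x hx).mul (hφ₂ x hx))).congr_deriv (by ring)
  rw [norm_integral_exp_I_mul_eq_of_boundary_zero hφ hφ₁ hφ₂c h0 hw
    (HasDerivAt.continuousOn hw₁) hwα hwβ]
  exact norm_integral_exp_I_mul_div_sq_le hαβ hlam hφ hφ₁ hφ₂c hlow hB₂ hn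
    ((hw₂.mul (HasDerivAt.continuousOn hφ₁)).sub ((HasDerivAt.continuousOn hw).mul hφ₃))
    (fun x hx => abs_deriv_div_numerator_le (hM x hx) (hM₁ x hx) (hB₂ x hx))
    (fun x hx => abs_deriv_div_numerator_le (hM x hx) (hM₂ x hx) (hB₃ x hx))

end OscillatoryIntegrals

section WindowKernel

open Set

/-- The polynomial weight `(x - 1/2)(3 - x)`: it vanishes at the end points of `[1/2, 3]`, so that
integrating by parts over that interval leaves no boundary terms, and is at least `1` on
`[1, 2]`. -/
def windowWeight (x : ℝ) : ℝ := (x - 1 / 2) * (3 - x)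

lemma hasDerivAt_windowWeight (x : ℝ) : HasDerivAt windowWeight (7 / 2 - 2 * x) x := by
  unfold windowWeight
  convert! ((hasDerivAt_id x).sub_const (1 / 2)).mul ((hasDerivAt_id x).const_sub 3) using 1
  simp only [id]
  ring

lemma hasDerivAt_deriv_windowWeight (x : ℝ) : HasDerivAt (fun y : ℝ => 7 / 2 - 2 * y) (-2) x := by
  simpa using ((hasDerivAt_id x).const_mul 2).const_sub (7 / 2)

lemma continuous_windowWeight : Continuous windowWeight := by
  unfold windowWeight
  fun_prop

lemma abs_windowWeight_le {x : ℝ} (hx : x ∈ Icc (1 / 2 : ℝ) 3) : |windowWeight x| ≤ 4 := by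
  obtain ⟨hx₁, hx₂⟩ := hx
  rw [windowWeight, abs_le]
  constructor <;> nlinarith

lemma abs_deriv_windowWeight_le {x : ℝ} (hx : x ∈ Icc (1 / 2 : ℝ) 3) : |7 / 2 - 2 * x| ≤ 4 := by
  obtain ⟨hx₁, hx₂⟩ := hx
  rw [abs_le]
  constructor <;> linarith

lemma windowWeight_nonneg {x : ℝ} (hx : x ∈ Icc (1 / 2 : ℝ) 3) : 0 ≤ windowWeight x :=
  mul_nonneg (sub_nonneg.2 hx.1) (sub_nonneg.2 hx.2)

lemma one_le_windowWeight {x : ℝ} (hx : x ∈ Icc (1 : ℝ) 2) : 1 ≤ windowWeight x := by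
  unfold windowWeight
  nlinarith [hx.1, hx.2]

/-- The kernel `K(y, w) = ∫ e^{i(yx + w x^a)} χ(x) dx`, where `χ` is the window weight. It is the
inner product of two waves whose space variables differ by `y` and times by `w`. -/
def windowKernel (a y w : ℝ) : ℂ :=
  ∫ x in (1 / 2 : ℝ)..3,
    Complex.exp (Complex.I * ((y * x + w * x ^ a : ℝ) : ℂ)) * (windowWeight x : ℂ)

lemma norm_windowKernel_le (a y w : ℝ) : ‖windowKernel a y w‖ ≤ 10 := by
  have h : ‖windowKernel a y w‖ ≤ 4 * |(3 : ℝ) - 1 / 2| := by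
    refine intervalIntegral.norm_integral_le_of_norm_le_const fun x hx => ?_
    rw [uIoc_of_le (by norm_num)] at hx
    rw [norm_mul, Complex.norm_exp_I_mul_ofReal, one_mul, Complex.norm_real, Real.norm_eq_abs]
    exact abs_windowWeight_le (Ioc_subset_Icc_self hx)
  exact h.trans_eq (by norm_num)

lemma windowKernel_neg (a y w : ℝ) :
    windowKernel a (-y) (-w) = (starRingEnd ℂ) (windowKernel a y w) := by
  have h : (1 / 2 : ℝ) ≤ 3 := by norm_num
  rw [windowKernel, windowKernel, intervalIntegral.integral_of_le h,
    intervalIntegral.integral_of_le h, ← integral_conj]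
  congr 1
  ext x
  rw [map_mul, ← Complex.exp_conj, map_mul, Complex.conj_I, Complex.conj_ofReal,
    Complex.conj_ofReal]
  congr 2
  push_cast
  ring

lemma hasDerivAt_const_mul_rpow (b c : ℝ) {x : ℝ} (hx : 0 < x) :
    HasDerivAt (fun x : ℝ => c * x ^ b) (c * b * x ^ (b - 1)) x := by
  simpa only [mul_assoc] using (Real.hasDerivAt_rpow_const (p := b) (Or.inl hx.ne')).const_mul c

lemma hasDerivAt_phase (a y w : ℝ) {x : ℝ} (hx : 0 < x) :
    HasDerivAt (fun x => y * x + w * x ^ a) (y + w * (a * x ^ (a - 1))) x := by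
  convert! ((hasDerivAt_id x).const_mul y).add (hasDerivAt_const_mul_rpow a w hx) using 1
  ring

lemma hasDerivAt_deriv_phase (a y w : ℝ) {x : ℝ} (hx : 0 < x) :
    HasDerivAt (fun x => y + w * (a * x ^ (a - 1))) (w * (a * (a - 1) * x ^ (a - 2))) x := by
  convert! ((hasDerivAt_const_mul_rpow (a - 1) a hx).const_mul w).const_add y using 1
  ring_nf

lemma hasDerivAt_second_deriv_phase (a w : ℝ) {x : ℝ} (hx : 0 < x) :
    HasDerivAt (fun x => w * (a * (a - 1) * x ^ (a - 2)))
      (w * (a * (a - 1) * (a - 2) * x ^ (a - 3))) x := by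
  convert! (hasDerivAt_const_mul_rpow (a - 2) (a * (a - 1)) hx).const_mul w using 1
  ring_nf

variable {a : ℝ}

lemma continuousOn_const_mul_rpow (b c : ℝ) :
    ContinuousOn (fun x : ℝ => c * x ^ b) (Icc (1 / 2 : ℝ) 3) :=
  HasDerivAt.continuousOn fun _ hx => hasDerivAt_const_mul_rpow b c (one_half_pos.trans_le hx.1)

lemma exists_abs_deriv_rpow_le (a : ℝ) : ∃ L ≥ (1 : ℝ), ∀ x ∈ Icc (1 / 2 : ℝ) 3,
    |a * x ^ (a - 1)| ≤ L ∧ |a * (a - 1) * x ^ (a - 2)| ≤ L ∧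
      |a * (a - 1) * (a - 2) * x ^ (a - 3)| ≤ L := by
  obtain ⟨L₁, hL₁⟩ := isCompact_Icc.exists_bound_of_continuousOn
    (continuousOn_const_mul_rpow (a - 1) a)
  obtain ⟨L₂, hL₂⟩ := isCompact_Icc.exists_bound_of_continuousOn
    (continuousOn_const_mul_rpow (a - 2) (a * (a - 1)))
  obtain ⟨L₃, hL₃⟩ := isCompact_Icc.exists_bound_of_continuousOn
    (continuousOn_const_mul_rpow (a - 3) (a * (a - 1) * (a - 2)))
  refine ⟨max 1 (max L₁ (max L₂ L₃)), le_max_left _ _, fun x hx => ⟨?_, ?_, ?_⟩⟩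
  · exact le_max_of_le_right (le_max_of_le_left (hL₁ x hx))
  · exact le_max_of_le_right (le_max_of_le_right (le_max_of_le_left (hL₂ x hx)))
  · exact le_max_of_le_right (le_max_of_le_right (le_max_of_le_right (hL₃ x hx)))

lemma exists_pos_le_abs_mul_rpow {c : ℝ} (hc : c ≠ 0) (b : ℝ) :
    ∃ κ > 0, ∀ x ∈ Icc (1 / 2 : ℝ) 3, κ ≤ |c| * x ^ b := by
  obtain ⟨x₀, hx₀, hmin⟩ := isCompact_Icc.exists_isMinOn
    (nonempty_Icc.2 (by norm_num : (1 / 2 : ℝ) ≤ 3)) (continuousOn_const_mul_rpow b |c|)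
  exact ⟨|c| * x₀ ^ b, mul_pos (abs_pos.2 hc)
    (Real.rpow_pos_of_pos (one_half_pos.trans_le hx₀.1) _), fun x hx => hmin hx⟩

lemma norm_windowKernel_le_of_second_deriv_pos {κ y w : ℝ} (hκ : 0 < κ)
    (hlow : ∀ x ∈ Icc (1 / 2 : ℝ) 3, κ ≤ |a * (a - 1)| * x ^ (a - 2))
    (hw : 0 < w * (a * (a - 1))) : ‖windowKernel a y w‖ ≤ 40 / √(κ * |w|) := by
  have hw0 : w ≠ 0 := left_ne_zero_of_mul hw.ne'
  have hI : uIcc (1 / 2 : ℝ) 3 = Icc (1 / 2 : ℝ) 3 := uIcc_of_le (by norm_num)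
  have hpos : ∀ x ∈ uIcc (1 / 2 : ℝ) 3, 0 < x := fun x hx => one_half_pos.trans_le (hI ▸ hx).1
  have hconv : ∀ x ∈ uIcc (1 / 2 : ℝ) 3, κ * |w| ≤ w * (a * (a - 1) * x ^ (a - 2)) := by
    intro x hx
    calc κ * |w| ≤ |a * (a - 1)| * x ^ (a - 2) * |w| := by gcongr; exact hlow x (hI ▸ hx)
      _ = |w * (a * (a - 1))| * x ^ (a - 2) := by rw [abs_mul w]; ring
      _ = w * (a * (a - 1) * x ^ (a - 2)) := by rw [abs_of_pos hw]; ring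
  refine (norm_integral_exp_I_mul_le_of_le_second_deriv (M := 4) (M₁ := 4) (by norm_num)
    (mul_pos hκ (abs_pos.2 hw0)) (fun x hx => hasDerivAt_phase a y w (hpos x hx))
    (fun x hx => hasDerivAt_deriv_phase a y w (hpos x hx))
    (hI ▸ continuousOn_const.mul (continuousOn_const_mul_rpow _ _)) hconv
    (fun x _ => hasDerivAt_windowWeight x) (by fun_prop)
    (fun x hx => abs_windowWeight_le (hI ▸ hx))
    (fun x hx => abs_deriv_windowWeight_le (hI ▸ hx))).trans ?_
  gcongr
  linarith [Real.pi_lt_d2]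

lemma norm_windowKernel_le_of_second_deriv {κ w : ℝ} (y : ℝ) (hκ : 0 < κ)
    (hlow : ∀ x ∈ Icc (1 / 2 : ℝ) 3, κ ≤ |a * (a - 1)| * x ^ (a - 2))
    (hw : w * (a * (a - 1)) ≠ 0) : ‖windowKernel a y w‖ ≤ 40 / √(κ * |w|) := by
  rcases hw.lt_or_gt with h | h
  · have := norm_windowKernel_le_of_second_deriv_pos (y := -y) (w := -w) hκ hlow (by linarith)
    rwa [windowKernel_neg, RCLike.norm_conj, abs_neg] at this
  · exact norm_windowKernel_le_of_second_deriv_pos hκ hlow h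

lemma norm_windowKernel_le_of_nonstationary {L y w : ℝ} (hL : ∀ x ∈ Icc (1 / 2 : ℝ) 3,
      |a * x ^ (a - 1)| ≤ L ∧ |a * (a - 1) * x ^ (a - 2)| ≤ L ∧
        |a * (a - 1) * (a - 2) * x ^ (a - 3)| ≤ L)
    (hy : y ≠ 0) (hyw : 2 * L * |w| ≤ |y|) : ‖windowKernel a y w‖ ≤ 384 / |y| ^ 2 := by
  have hy0 : 0 < |y| := abs_pos.2 hy
  have hI : uIcc (1 / 2 : ℝ) 3 = Icc (1 / 2 : ℝ) 3 := uIcc_of_le (by norm_num)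
  rw [← hI] at hL
  have hpos : ∀ x ∈ uIcc (1 / 2 : ℝ) 3, 0 < x := fun x hx => one_half_pos.trans_le (hI ▸ hx).1
  have hsmall : ∀ z, |z| ≤ L → |w * z| ≤ |y| / 2 := by
    intro z hz
    rw [abs_mul]
    linarith [mul_le_mul_of_nonneg_left hz (abs_nonneg w)]
  have hlow : ∀ x ∈ uIcc (1 / 2 : ℝ) 3, |y| / 2 ≤ |y + w * (a * x ^ (a - 1))| := by
    intro x hx
    have h := abs_sub_abs_le_abs_add y (w * (a * x ^ (a - 1)))
    linarith [hsmall _ (hL x hx).1]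
  refine (norm_integral_exp_I_mul_le_of_le_abs_deriv (lam := |y| / 2) (B := 1) (M := 4)
    (by norm_num) (by positivity) (fun x hx => hasDerivAt_phase a y w (hpos x hx))
    (fun x hx => hasDerivAt_deriv_phase a y w (hpos x hx))
    (fun x hx => hasDerivAt_second_deriv_phase a w (hpos x hx))
    (hI ▸ continuousOn_const.mul (continuousOn_const_mul_rpow _ _)) hlow
    (fun x hx => by rw [one_mul]; exact (hsmall _ (hL x hx).2.1).trans (hlow x hx))
    (fun x hx => by rw [one_mul]; exact (hsmall _ (hL x hx).2.2).trans (hlow x hx))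
    (fun x _ => hasDerivAt_windowWeight x) (fun x _ => hasDerivAt_deriv_windowWeight x)
    continuousOn_const (by norm_num [windowWeight]) (by norm_num [windowWeight])
    (fun x hx => abs_windowWeight_le (hI ▸ hx))
    (fun x hx => abs_deriv_windowWeight_le (hI ▸ hx)) (fun x _ => by norm_num)).trans_eq ?_
  field_simp
  norm_num

lemma exists_norm_windowKernel_le_or (ha0 : a ≠ 0) (ha1 : a ≠ 1) :
    ∃ C > 0, ∃ L > 0, ∀ y w : ℝ, ‖windowKernel a y w‖ ≤ C * (1 + |y|) ^ (-2 : ℝ) ∨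
      1 + |y| ≤ L * |w| ∧ ‖windowKernel a y w‖ ≤ C * (1 + |y|) ^ (-(1 / 2) : ℝ) := by
  have haa : a * (a - 1) ≠ 0 := mul_ne_zero ha0 (sub_ne_zero.2 ha1)
  obtain ⟨L, hL1, hL⟩ := exists_abs_deriv_rpow_le a
  obtain ⟨κ, hκ, hlow⟩ := exists_pos_le_abs_mul_rpow haa (a - 2)
  refine ⟨1536 + 40 / √(κ / (4 * L)), by positivity, 4 * L, by positivity, fun y w => ?_⟩
  have hy1 : 0 < 1 + |y| := by positivity
  have hC : 0 ≤ 40 / √(κ / (4 * L)) := by positivity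
  have hdecay : ∀ {K : ℝ}, ‖windowKernel a y w‖ ≤ K / (1 + |y|) ^ 2 → K ≤ 1536 →
      ‖windowKernel a y w‖ ≤ (1536 + 40 / √(κ / (4 * L))) * (1 + |y|) ^ (-2 : ℝ) := by
    intro K h hK
    rw [Real.rpow_neg hy1.le, Real.rpow_two, ← div_eq_mul_inv]
    exact h.trans (by gcongr; linarith)
  rcases le_or_gt |y| 1 with hy | hy
  · refine Or.inl (hdecay ((norm_windowKernel_le a y w).trans ?_) (by norm_num : (40 : ℝ) ≤ 1536))
    rw [le_div_iff₀ (by positivity)]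
    nlinarith [abs_nonneg y]
  rcases le_or_gt (2 * L * |w|) |y| with hyw | hyw
  · refine Or.inl (hdecay ((norm_windowKernel_le_of_nonstationary hL
      (abs_pos.1 (one_pos.trans hy)) hyw).trans ?_) le_rfl)
    rw [div_le_div_iff₀ (by positivity) (by positivity)]
    nlinarith
  have hwy : 1 + |y| ≤ 4 * L * |w| := by linarith
  have hw0 : w ≠ 0 := abs_pos.1 (pos_of_mul_pos_right (hy1.trans_le hwy) (by positivity))
  refine Or.inr ⟨hwy, (norm_windowKernel_le_of_second_deriv y hκ hlow
    (mul_ne_zero hw0 haa)).trans ?_⟩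
  have hscale : κ / (4 * L) * (1 + |y|) ≤ κ * |w| := by
    rw [div_mul_eq_mul_div, div_le_iff₀ (by positivity)]
    nlinarith
  calc 40 / √(κ * |w|) ≤ 40 / √(κ / (4 * L) * (1 + |y|)) := by gcongr
    _ = 40 / √(κ / (4 * L)) * (1 + |y|) ^ (-(1 / 2) : ℝ) := by
        rw [Real.sqrt_mul (by positivity), Real.rpow_neg hy1.le, ← Real.sqrt_eq_rpow, ← div_div,
          div_eq_mul_inv _ √(1 + |y|)]
    _ ≤ _ := by gcongr; linarith

theorem exists_norm_windowKernel_le (ha0 : a ≠ 0) (ha1 : a ≠ 1) {ε : ℝ} (hε : 0 ≤ ε)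
    (hε1 : ε ≤ 1) :
    ∃ C > 0, ∀ W ≥ (1 : ℝ), ∀ w, |w| ≤ 2 * W → ∀ y,
      ‖windowKernel a y w‖ ≤ C * W ^ (1 / 2 + ε) * (1 + |y|) ^ (-(1 + ε)) := by
  obtain ⟨C, hC, L, hL, hdich⟩ := exists_norm_windowKernel_le_or ha0 ha1
  refine ⟨C * (1 + (2 * L) ^ (1 / 2 + ε)), by positivity, fun W hW w hw y => ?_⟩
  have hy1 : 0 < 1 + |y| := by positivity
  have hW1 : 1 ≤ W ^ (1 / 2 + ε) := Real.one_le_rpow hW (by positivity)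
  have hL0 : 0 ≤ (2 * L) ^ (1 / 2 + ε) := by positivity
  rcases hdich y w with h | ⟨hwy, h⟩
  · calc ‖windowKernel a y w‖ ≤ C * (1 + |y|) ^ (-2 : ℝ) := h
      _ ≤ C * (1 + |y|) ^ (-(1 + ε)) := by
          gcongr
          · linarith [abs_nonneg y]
          · linarith
      _ = C * 1 * 1 * (1 + |y|) ^ (-(1 + ε)) := by ring
      _ ≤ _ := by gcongr; linarith
  · have hyW : 1 + |y| ≤ 2 * L * W := by nlinarith
    calc ‖windowKernel a y w‖ ≤ C * (1 + |y|) ^ (-(1 / 2) : ℝ) := h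
      _ = C * ((1 + |y|) ^ (1 / 2 + ε) * (1 + |y|) ^ (-(1 + ε))) := by
          rw [← Real.rpow_add hy1]; congr 2; ring
      _ ≤ C * ((2 * L * W) ^ (1 / 2 + ε) * (1 + |y|) ^ (-(1 + ε))) := by gcongr
      _ = C * (2 * L) ^ (1 / 2 + ε) * W ^ (1 / 2 + ε) * (1 + |y|) ^ (-(1 + ε)) := by
          rw [Real.mul_rpow (by positivity) (by positivity)]; ring
      _ ≤ _ := by gcongr; linarith

end WindowKernel

section AlmostOrthogonality

variable {𝕜 E ι α : Type*} [RCLike 𝕜] [NormedAddCommGroup E] [InnerProductSpace 𝕜 E]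

lemma norm_sum_smul_sq_le {J : Finset ι} {g : ι → E} {A : ℝ}
    (hA : ∀ j ∈ J, ∑ k ∈ J, ‖⟪g j, g k⟫_𝕜‖ ≤ A) (c : ι → 𝕜) :
    ‖∑ j ∈ J, c j • g j‖ ^ 2 ≤ A * ∑ j ∈ J, ‖c j‖ ^ 2 := by
  have hinner : ⟪∑ j ∈ J, c j • g j, ∑ j ∈ J, c j • g j⟫_𝕜
      = ∑ j ∈ J, ∑ k ∈ J, (starRingEnd 𝕜) (c j) * (c k * ⟪g j, g k⟫_𝕜) := by
    simp_rw [sum_inner, inner_smul_left, inner_sum, Finset.mul_sum, inner_smul_right]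
  have hterm : ∀ j k, ‖(starRingEnd 𝕜) (c j) * (c k * ⟪g j, g k⟫_𝕜)‖
      ≤ ‖c j‖ ^ 2 / 2 * ‖⟪g j, g k⟫_𝕜‖ + ‖c k‖ ^ 2 / 2 * ‖⟪g k, g j⟫_𝕜‖ := by
    intro j k
    rw [norm_mul, norm_mul, RCLike.norm_conj, ← mul_assoc, norm_inner_symm (g k) (g j), ← add_mul]
    gcongr
    nlinarith [sq_nonneg (‖c j‖ - ‖c k‖)]
  calc ‖∑ j ∈ J, c j • g j‖ ^ 2
      = ‖⟪∑ j ∈ J, c j • g j, ∑ j ∈ J, c j • g j⟫_𝕜‖ := by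
        rw [inner_self_eq_norm_sq_to_K, norm_pow, RCLike.norm_ofReal, abs_norm]
    _ ≤ ∑ j ∈ J, ∑ k ∈ J,
          (‖c j‖ ^ 2 / 2 * ‖⟪g j, g k⟫_𝕜‖ + ‖c k‖ ^ 2 / 2 * ‖⟪g k, g j⟫_𝕜‖) := by
        rw [hinner]
        exact (norm_sum_le _ _).trans (Finset.sum_le_sum fun j _ =>
          (norm_sum_le _ _).trans (Finset.sum_le_sum fun k _ => hterm j k))
    _ = ∑ j ∈ J, ‖c j‖ ^ 2 * ∑ k ∈ J, ‖⟪g j, g k⟫_𝕜‖ := by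
        simp_rw [Finset.sum_add_distrib]
        rw [Finset.sum_comm (f := fun j k => ‖c k‖ ^ 2 / 2 * ‖⟪g k, g j⟫_𝕜‖),
          ← Finset.sum_add_distrib]
        simp_rw [← Finset.mul_sum, ← add_mul, add_halves]
    _ ≤ ∑ j ∈ J, ‖c j‖ ^ 2 * A := by gcongr with j hj; exact hA j hj
    _ = A * ∑ j ∈ J, ‖c j‖ ^ 2 := by rw [← Finset.sum_mul, mul_comm]

/-- Selberg's inequality, the dual form of `norm_sum_smul_sq_le`. -/
theorem sum_norm_inner_sq_le {J : Finset ι} {g : ι → E} {A : ℝ} (hA0 : 0 ≤ A)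
    (hA : ∀ j ∈ J, ∑ k ∈ J, ‖⟪g j, g k⟫_𝕜‖ ≤ A) (f : E) :
    ∑ j ∈ J, ‖⟪g j, f⟫_𝕜‖ ^ 2 ≤ A * ‖f‖ ^ 2 := by
  set S : ℝ := ∑ j ∈ J, ‖⟪g j, f⟫_𝕜‖ ^ 2 with hS
  set v : E := ∑ j ∈ J, ⟪g j, f⟫_𝕜 • g j with hv
  have hS0 : 0 ≤ S := Finset.sum_nonneg fun _ _ => sq_nonneg _
  have hvf : ⟪v, f⟫_𝕜 = (S : 𝕜) := by
    rw [hv, hS, sum_inner]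
    push_cast
    exact Finset.sum_congr rfl fun j _ => by rw [inner_smul_left, RCLike.conj_mul]
  have hSv : S ≤ ‖v‖ * ‖f‖ := by
    simpa only [hvf, RCLike.norm_ofReal, abs_of_nonneg hS0] using norm_inner_le_norm (𝕜 := 𝕜) v f
  rcases hS0.eq_or_lt with h | hSpos
  · rw [← h]
    positivity
  refine le_of_mul_le_mul_right ?_ hSpos
  calc S * S ≤ (‖v‖ * ‖f‖) * (‖v‖ * ‖f‖) := by gcongr
    _ = ‖v‖ ^ 2 * ‖f‖ ^ 2 := by ring
    _ ≤ A * S * ‖f‖ ^ 2 := by gcongr; exact norm_sum_smul_sq_le hA _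
    _ = A * ‖f‖ ^ 2 * S := by ring

variable {S T : Set α} {χ : α → ℝ} {G : α → 𝕜}

lemma norm_div_sqrt_le (hχ1 : ∀ x ∈ S, 1 ≤ χ x) {x : α} (hx : x ∈ S) :
    ‖G x / (√(χ x) : 𝕜)‖ ≤ ‖G x‖ := by
  rw [norm_div, RCLike.norm_ofReal, abs_of_nonneg (Real.sqrt_nonneg _)]
  exact div_le_self (norm_nonneg _) (Real.one_le_sqrt.2 (hχ1 x hx))

variable [MeasurableSpace α] {μ : Measure α}

lemma inner_toLp {u v : α → 𝕜} (hu : MemLp u 2 μ) (hv : MemLp v 2 μ) :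
    ⟪hu.toLp u, hv.toLp v⟫_𝕜 = ∫ x, (starRingEnd 𝕜) (u x) * v x ∂μ := by
  rw [L2.inner_def]
  refine integral_congr_ae ?_
  filter_upwards [hu.coeFn_toLp, hv.coeFn_toLp] with x hux hvx
  rw [hux, hvx, RCLike.inner_apply']

lemma norm_toLp_sq {f : α → 𝕜} (hf : MemLp f 2 μ) : ‖hf.toLp f‖ ^ 2 = ∫ x, ‖f x‖ ^ 2 ∂μ := by
  have h := inner_toLp hf hf
  simp_rw [inner_self_eq_norm_sq_to_K, RCLike.conj_mul, ← RCLike.ofReal_pow, integral_ofReal] at h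
  exact RCLike.ofReal_injective h

lemma sum_norm_integral_sq_le {J : Finset ι} {u : ι → α → 𝕜} {f : α → 𝕜}
    (hu : ∀ j, MemLp (u j) 2 μ) (hf : MemLp f 2 μ) {A : ℝ} (hA0 : 0 ≤ A)
    (hA : ∀ j ∈ J, ∑ k ∈ J, ‖∫ x, (starRingEnd 𝕜) (u j x) * u k x ∂μ‖ ≤ A) :
    ∑ j ∈ J, ‖∫ x, (starRingEnd 𝕜) (u j x) * f x ∂μ‖ ^ 2 ≤ A * ∫ x, ‖f x‖ ^ 2 ∂μ := by
  simp_rw [← norm_toLp_sq hf, ← inner_toLp (hu _) hf]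
  refine sum_norm_inner_sq_le hA0 ?_ _
  simpa only [inner_toLp] using hA

lemma measurable_div_sqrt (hχ : Measurable χ) (hG : Measurable G) :
    Measurable fun x => G x / (√(χ x) : 𝕜) :=
  hG.div (RCLike.measurable_ofReal.comp hχ.sqrt)

lemma integrableOn_norm_div_sqrt_sq (hS : MeasurableSet S) (hχ : Measurable χ)
    (hχ1 : ∀ x ∈ S, 1 ≤ χ x) (hGm : Measurable G)
    (hG : IntegrableOn (fun x => ‖G x‖ ^ 2) S μ) :
    IntegrableOn (fun x => ‖G x / (√(χ x) : 𝕜)‖ ^ 2) S μ := by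
  refine hG.mono' ((measurable_div_sqrt hχ hGm).norm.pow_const 2).aestronglyMeasurable
    ((ae_restrict_mem hS).mono fun x hx => ?_)
  rw [norm_pow, norm_norm]
  gcongr
  exact norm_div_sqrt_le hχ1 hx

-- The functions `e j` are almost orthogonal for the weight `χ` on `T`; dividing `G` by `√χ`
-- transfers the resulting bound to the subset `S`, where `χ` is at least `1`.
lemma sum_norm_setIntegral_sq_le_of_weight (hS : MeasurableSet S) (hT : MeasurableSet T)
    (hST : S ⊆ T) (hχ : Measurable χ) (hχi : IntegrableOn χ T μ) (hχ0 : ∀ x ∈ T, 0 ≤ χ x)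
    (hχ1 : ∀ x ∈ S, 1 ≤ χ x) {e : ι → α → 𝕜} (he : ∀ j, Measurable (e j))
    (he1 : ∀ j x, ‖e j x‖ = 1) (hGm : Measurable G)
    (hG : IntegrableOn (fun x => ‖G x‖ ^ 2) S μ) {J : Finset ι} {A : ℝ} (hA0 : 0 ≤ A)
    (hA : ∀ j ∈ J, ∑ k ∈ J, ‖∫ x in T, e j x * (starRingEnd 𝕜) (e k x) * (χ x : 𝕜) ∂μ‖ ≤ A) :
    ∑ j ∈ J, ‖∫ x in S, e j x * G x ∂μ‖ ^ 2 ≤ A * ∫ x in S, ‖G x‖ ^ 2 ∂μ := by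
  set u : ι → α → 𝕜 := fun j x => (√(χ x) : 𝕜) * (starRingEnd 𝕜) (e j x) with hu
  set f : α → 𝕜 := S.indicator fun x => G x / (√(χ x) : 𝕜) with hf
  have hfm : Measurable f := (measurable_div_sqrt hχ hGm).indicator hS
  have hf_sq : (fun x => ‖f x‖ ^ 2) = S.indicator fun x => ‖G x / (√(χ x) : 𝕜)‖ ^ 2 := by
    ext x
    by_cases hx : x ∈ S <;> simp [hf, hx]
  have hfi := integrableOn_norm_div_sqrt_sq hS hχ hχ1 hGm hG
  have hu2 : ∀ j, MemLp (u j) 2 (μ.restrict T) := fun j => by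
    have hm : Measurable (u j) := (RCLike.measurable_ofReal.comp hχ.sqrt).mul
      (RCLike.continuous_conj.measurable.comp (he j))
    rw [memLp_two_iff_integrable_sq_norm hm.aestronglyMeasurable]
    exact hχi.congr_fun (fun x hx => by simp [hu, he1, Real.sq_sqrt (hχ0 x hx)]) hT
  have hf2 : MemLp f 2 (μ.restrict T) := by
    rw [memLp_two_iff_integrable_sq_norm hfm.aestronglyMeasurable, hf_sq]
    exact ((integrable_indicator_iff hS).2 hfi).restrict
  have hcoeff : ∀ j, ∫ x in T, (starRingEnd 𝕜) (u j x) * f x ∂μ = ∫ x in S, e j x * G x ∂μ := by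
    intro j
    rw [← Set.inter_eq_right.2 hST, ← setIntegral_indicator hS]
    congr with x
    by_cases hx : x ∈ S
    · have hχx : (√(χ x) : 𝕜) ≠ 0 :=
        RCLike.ofReal_ne_zero.2 (Real.sqrt_pos.2 (one_pos.trans_le (hχ1 x hx))).ne'
      simp only [hu, hf, hx, Set.indicator_of_mem, map_mul, RCLike.conj_conj, RCLike.conj_ofReal]
      field_simp
    · simp [hf, hx]
  have hgram : ∀ j k, ∫ x in T, (starRingEnd 𝕜) (u j x) * u k x ∂μ
      = ∫ x in T, e j x * (starRingEnd 𝕜) (e k x) * (χ x : 𝕜) ∂μ := by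
    refine fun j k => setIntegral_congr_fun hT fun x hx => ?_
    simp only [hu, map_mul, RCLike.conj_conj, RCLike.conj_ofReal]
    rw [mul_mul_mul_comm, ← RCLike.ofReal_mul, Real.mul_self_sqrt (hχ0 x hx), mul_comm]
  have hsel := sum_norm_integral_sq_le (J := J) hu2 hf2 hA0 (by simpa only [hgram] using hA)
  simp_rw [hcoeff] at hsel
  refine hsel.trans ?_
  gcongr
  rw [hf_sq, setIntegral_indicator hS, Set.inter_eq_right.2 hST]
  exact setIntegral_mono_on hfi hG hS fun x hx => by gcongr; exact norm_div_sqrt_le hχ1 hx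

end AlmostOrthogonality

section MaximalFunction

open Set

/-- The oscillatory integral `∫_S e^{i(rx + t x^a)} G(x) dx` over a set `S` of frequencies. -/
def osc (a : ℝ) (S : Set ℝ) (G : ℝ → ℂ) (r t : ℝ) : ℂ :=
  ∫ x in S, Complex.exp (Complex.I * ((r * x + t * x ^ a : ℝ) : ℂ)) * G x

/-- The maximal function of `osc` over the times in `[-W, W]`. -/
def maxOsc (a W : ℝ) (S : Set ℝ) (G : ℝ → ℂ) (r : ℝ) : ℝ≥0∞ :=
  ⨆ t : Icc (-W) W, ‖osc a S G r t‖ₑ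

variable {a W : ℝ} {S : Set ℝ} {G : ℝ → ℂ}

lemma enorm_osc_le_maxOsc (a : ℝ) (S : Set ℝ) (G : ℝ → ℂ) (r : ℝ) {t : ℝ}
    (ht : t ∈ Icc (-W) W) : ‖osc a S G r t‖ₑ ≤ maxOsc a W S G r :=
  le_iSup (fun t : Icc (-W) W => ‖osc a S G r t‖ₑ) ⟨t, ht⟩

lemma integrableOn_exp_mul (a : ℝ) (hG : IntegrableOn G S) (r t : ℝ) :
    IntegrableOn (fun x => Complex.exp (Complex.I * ((r * x + t * x ^ a : ℝ) : ℂ)) * G x) S :=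
  hG.bdd_mul (c := 1) (by fun_prop : Measurable _).aestronglyMeasurable
    (.of_forall fun _ => (Complex.norm_exp_I_mul_ofReal _).le)

lemma continuous_osc (a : ℝ) (hG : IntegrableOn G S) :
    Continuous fun q : ℝ × ℝ => osc a S G q.1 q.2 := by
  unfold osc
  refine continuous_of_dominated (bound := fun x => ‖G x‖)
    (fun q => (integrableOn_exp_mul a hG q.1 q.2).aestronglyMeasurable)
    (fun q => .of_forall fun x => ?_) hG.norm (.of_forall fun x => by fun_prop)
  rw [norm_mul, Complex.norm_exp_I_mul_ofReal, one_mul]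

lemma measurable_maxOsc (a W : ℝ) (hG : IntegrableOn G S) : Measurable (maxOsc a W S G) := by
  refine (lowerSemicontinuous_iSup fun t => Continuous.lowerSemicontinuous ?_).measurable
  exact ((continuous_osc a hG).comp (by fun_prop : Continuous fun r : ℝ => (r, (t : ℝ)))).enorm

lemma exists_maxOsc_eq (a : ℝ) (hW : 0 ≤ W) (hG : IntegrableOn G S) (r : ℝ) :
    ∃ t, |t| ≤ W ∧ maxOsc a W S G r = ‖osc a S G r t‖ₑ := by
  have hc : Continuous fun t => ‖osc a S G r t‖ₑ :=
    ((continuous_osc a hG).comp (by fun_prop : Continuous fun t : ℝ => (r, t))).enorm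
  obtain ⟨t, ht, hmax⟩ := isCompact_Icc.exists_isMaxOn
    (nonempty_Icc.2 (by linarith : -W ≤ W)) hc.continuousOn
  exact ⟨t, abs_le.2 ht, le_antisymm (iSup_le fun t' => hmax t'.2) (enorm_osc_le_maxOsc a S G r ht)⟩

lemma setIntegral_exp_mul_conj_exp_mul_windowWeight (a y y' t t' : ℝ) :
    ∫ x in Ioc (1 / 2 : ℝ) 3, Complex.exp (Complex.I * ((y * x + t * x ^ a : ℝ) : ℂ)) *
        (starRingEnd ℂ) (Complex.exp (Complex.I * ((y' * x + t' * x ^ a : ℝ) : ℂ))) *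
        (windowWeight x : ℂ) = windowKernel a (y - y') (t - t') := by
  rw [windowKernel, intervalIntegral.integral_of_le (by norm_num)]
  congr with x
  rw [← Complex.exp_conj, map_mul, Complex.conj_I, Complex.conj_ofReal, ← Complex.exp_add]
  congr 2
  push_cast
  ring

lemma sum_norm_osc_sq_le {ι : Type*} {J : Finset ι} {y t : ι → ℝ} {A : ℝ} (hA0 : 0 ≤ A)
    (hA : ∀ j ∈ J, ∑ k ∈ J, ‖windowKernel a (y j - y k) (t j - t k)‖ ≤ A) (hG : Continuous G) :
    ∑ j ∈ J, ‖osc a (Ioc 1 2) G (y j) (t j)‖ ^ 2 ≤ A * ∫ x in Ioc (1 : ℝ) 2, ‖G x‖ ^ 2 := by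
  refine sum_norm_setIntegral_sq_le_of_weight (T := Ioc (1 / 2) 3) measurableSet_Ioc
    measurableSet_Ioc (Ioc_subset_Ioc (by norm_num) (by norm_num))
    continuous_windowWeight.measurable continuous_windowWeight.integrableOn_Ioc
    (fun x hx => windowWeight_nonneg (Ioc_subset_Icc_self hx))
    (fun x hx => one_le_windowWeight (Ioc_subset_Icc_self hx)) (fun j => by fun_prop)
    (fun j x => Complex.norm_exp_I_mul_ofReal _) hG.measurable
    (hG.norm.pow 2).integrableOn_Ioc hA0 fun j hj => ?_
  simpa only [setIntegral_exp_mul_conj_exp_mul_windowWeight, Complex.coe_algebraMap] using hA j hj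

lemma lintegral_eq_lintegral_tsum_translates {f : ℝ → ℝ≥0∞} (hf : Measurable f) :
    ∫⁻ y, f y = ∫⁻ θ in Ioc (0 : ℝ) 1, ∑' m : ℤ, f (m + θ) := by
  rw [lintegral_tsum (fun m => by fun_prop), ← setLIntegral_univ, ← iUnion_Ioc_intCast ℝ,
    lintegral_iUnion (fun _ => measurableSet_Ioc) (pairwise_disjoint_Ioc_intCast ℝ)]
  refine tsum_congr fun m => ?_
  rw [← (measurePreserving_add_left volume (m : ℝ)).setLIntegral_comp_preimage
    measurableSet_Ioc hf, preimage_const_add_Ioc, sub_self, add_sub_cancel_left]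

lemma summable_one_add_abs_rpow {p : ℝ} (hp : 1 < p) :
    Summable fun m : ℤ => (1 + |(m : ℝ)|) ^ (-p) := by
  refine Summable.of_nonneg_of_le (fun m => by positivity) (fun m => ?_)
    ((Real.summable_one_div_int_add_rpow (1 / 2) p).2 hp)
  have hne : (m : ℝ) + 1 / 2 ≠ 0 := by
    intro h
    have : 2 * m + 1 = 0 := by exact_mod_cast (by linarith : (2 * m + 1 : ℝ) = 0)
    omega
  have hle : |(m : ℝ) + 1 / 2| ≤ 1 + |(m : ℝ)| := by
    have := abs_add_le (m : ℝ) (1 / 2)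
    rw [abs_of_pos (one_half_pos (α := ℝ))] at this
    linarith
  rw [Real.rpow_neg (by positivity), one_div]
  have := abs_pos.2 hne
  gcongr

lemma lintegral_enorm_sq_eq {α E : Type*} [MeasurableSpace α] {μ : Measure α}
    [NormedAddCommGroup E] {f : α → E} (hf : Integrable (fun x => ‖f x‖ ^ 2) μ) :
    ∫⁻ x, ‖f x‖ₑ ^ 2 ∂μ = ENNReal.ofReal (∫ x, ‖f x‖ ^ 2 ∂μ) := by
  rw [ofReal_integral_eq_lintegral_ofReal hf (.of_forall fun x => by positivity)]
  simp_rw [ENNReal.ofReal_pow (norm_nonneg _), ofReal_norm]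

lemma tsum_maxOsc_sq_le {κ : ℤ → ℝ} (hκ0 : ∀ m, 0 ≤ κ m) (hκ : Summable κ) (hW : 0 ≤ W)
    (hker : ∀ w, |w| ≤ 2 * W → ∀ m : ℤ, ‖windowKernel a m w‖ ≤ κ m) (hG : Continuous G)
    (θ : ℝ) :
    ∑' m : ℤ, maxOsc a W (Ioc 1 2) G (m + θ) ^ 2
      ≤ ENNReal.ofReal (∑' m, κ m) * ∫⁻ x in Ioc (1 : ℝ) 2, ‖G x‖ₑ ^ 2 := by
  choose t ht hmax using fun m : ℤ =>
    exists_maxOsc_eq a hW (hG.integrableOn_Ioc (a := 1) (b := 2)) (m + θ)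
  have hrow : ∀ J : Finset ℤ, ∀ j ∈ J,
      ∑ k ∈ J, ‖windowKernel a (j + θ - (k + θ)) (t j - t k)‖ ≤ ∑' m, κ m := by
    intro J j _
    calc ∑ k ∈ J, ‖windowKernel a (j + θ - (k + θ)) (t j - t k)‖ ≤ ∑ k ∈ J, κ (j - k) := by
          gcongr with k
          have hjk : (j + θ - (k + θ) : ℝ) = ((j - k : ℤ) : ℝ) := by push_cast; ring
          rw [hjk]
          exact hker _ (by linarith [abs_sub (t j) (t k), ht j, ht k]) _
      _ ≤ ∑' k, κ (j - k) := ((Equiv.subLeft j).summable_iff.2 hκ).sum_le_tsum J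
          fun k _ => hκ0 _
      _ = ∑' m, κ m := (Equiv.subLeft j).tsum_eq κ
  rw [ENNReal.tsum_eq_iSup_sum]
  refine iSup_le fun J => ?_
  rw [lintegral_enorm_sq_eq (hG.norm.pow 2).integrableOn_Ioc,
    ← ENNReal.ofReal_mul (tsum_nonneg hκ0)]
  convert! ENNReal.ofReal_le_ofReal (sum_norm_osc_sq_le (tsum_nonneg hκ0) (hrow J) hG) using 1
  rw [ENNReal.ofReal_sum_of_nonneg fun _ _ => by positivity]
  exact Finset.sum_congr rfl fun m _ => by
    rw [hmax, ENNReal.ofReal_pow (norm_nonneg _), ofReal_norm]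

theorem exists_lintegral_maxOsc_Ioc_one_two_le (ha0 : a ≠ 0) (ha1 : a ≠ 1) {ε : ℝ} (hε : 0 < ε)
    (hε1 : ε ≤ 1) :
    ∃ C > 0, ∀ W ≥ (1 : ℝ), ∀ G : ℝ → ℂ, Continuous G →
      ∫⁻ y, maxOsc a W (Ioc 1 2) G y ^ 2
        ≤ ENNReal.ofReal (C * W ^ (1 / 2 + ε)) * ∫⁻ x in Ioc (1 : ℝ) 2, ‖G x‖ₑ ^ 2 := by
  obtain ⟨C, hC, hker⟩ := exists_norm_windowKernel_le ha0 ha1 hε.le hε1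
  have hsum := summable_one_add_abs_rpow (lt_add_of_pos_right 1 hε)
  refine ⟨C * ∑' m : ℤ, (1 + |(m : ℝ)|) ^ (-(1 + ε)),
    mul_pos hC (hsum.tsum_pos (fun m => by positivity) 0 (by positivity)), fun W hW G hG => ?_⟩
  have hW0 : 0 ≤ W := zero_le_one.trans hW
  have hmax := measurable_maxOsc a W (hG.integrableOn_Ioc (a := 1) (b := 2))
  rw [lintegral_eq_lintegral_tsum_translates (hmax.pow_const 2), mul_right_comm, ← tsum_mul_left]
  refine (lintegral_mono fun θ => tsum_maxOsc_sq_le (fun m => by positivity) (hsum.mul_left _) hW0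
    (fun w hw m => hker W hW w hw m) hG θ).trans_eq ?_
  simp

end MaximalFunction

section SquareFunctionInequalities

variable {α : Type*} [MeasurableSpace α] {μ : Measure α}

lemma lintegral_mul_sq_le {f g : α → ℝ≥0∞} (hf : AEMeasurable f μ) (hg : AEMeasurable g μ) :
    (∫⁻ x, f x * g x ∂μ) ^ 2 ≤ (∫⁻ x, f x ^ 2 ∂μ) * ∫⁻ x, g x ^ 2 ∂μ := by
  have h := ENNReal.lintegral_mul_le_Lp_mul_Lq μ Real.HolderConjugate.two_two hf hg
  simp only [Pi.mul_apply, ENNReal.rpow_two] at h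
  refine (pow_le_pow_left' h 2).trans_eq ?_
  rw [mul_pow, ← ENNReal.rpow_two, ← ENNReal.rpow_two, ← ENNReal.rpow_mul, ← ENNReal.rpow_mul]
  norm_num

lemma lintegral_sq_le {f : α → ℝ≥0∞} (hf : AEMeasurable f μ) :
    (∫⁻ x, f x ∂μ) ^ 2 ≤ μ Set.univ * ∫⁻ x, f x ^ 2 ∂μ := by
  simpa using lintegral_mul_sq_le (f := fun _ => 1) aemeasurable_const hf

lemma tsum_mul_sq_le (f g : ℕ → ℝ≥0∞) :
    (∑' k, f k * g k) ^ 2 ≤ (∑' k, f k ^ 2) * ∑' k, g k ^ 2 := by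
  simpa only [lintegral_count] using lintegral_mul_sq_le (μ := Measure.count) (f := f) (g := g)
    (measurable_of_countable _).aemeasurable (measurable_of_countable _).aemeasurable

lemma ennreal_add_sq_le (x y : ℝ≥0∞) : (x + y) ^ 2 ≤ 2 * (x ^ 2 + y ^ 2) := by
  have h := ENNReal.rpow_add_le_mul_rpow_add_rpow x y one_le_two
  norm_num at h
  exact h

lemma tsum_sq_le_of_geometric {q : ℝ≥0∞} (hq0 : q ≠ 0) (hq : q ≠ ∞) (f : ℕ → ℝ≥0∞) :
    (∑' k, f k) ^ 2 ≤ (1 - q ^ 2)⁻¹ * ∑' k, ((q ^ k)⁻¹) ^ 2 * f k ^ 2 := by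
  have hf : ∀ k, f k = q ^ k * ((q ^ k)⁻¹ * f k) := fun k => by
    rw [← mul_assoc, ENNReal.mul_inv_cancel (pow_ne_zero k hq0) (ENNReal.pow_ne_top hq), one_mul]
  calc (∑' k, f k) ^ 2 = (∑' k, q ^ k * ((q ^ k)⁻¹ * f k)) ^ 2 := by rw [← tsum_congr hf]
    _ ≤ (∑' k, (q ^ k) ^ 2) * ∑' k, ((q ^ k)⁻¹ * f k) ^ 2 := tsum_mul_sq_le _ _
    _ = (1 - q ^ 2)⁻¹ * ∑' k, ((q ^ k)⁻¹) ^ 2 * f k ^ 2 := by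
        simp_rw [← pow_mul, mul_comm _ 2, pow_mul, ENNReal.tsum_geometric, mul_pow]

lemma exists_lintegral_tsum_sq_le (μ : Measure α) {δ : ℝ} (hδ : 0 < δ) :
    ∃ C : ℝ≥0, ∀ f : ℕ → α → ℝ≥0∞, (∀ k, Measurable (f k)) →
      ∫⁻ x, (∑' k, f k x) ^ 2 ∂μ
        ≤ C * ∑' k : ℕ, ENNReal.ofReal ((2 ^ k) ^ δ) * ∫⁻ x, f k x ^ 2 ∂μ := by
  set p : ℝ := 2 ^ (-(δ / 2)) with hp
  have hp0 : 0 < p := by positivity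
  have hp1 : p < 1 := Real.rpow_lt_one_of_one_lt_of_neg one_lt_two (by linarith)
  have hweight : ∀ k : ℕ, ((ENNReal.ofReal p ^ k)⁻¹) ^ 2 = ENNReal.ofReal ((2 ^ k) ^ δ) := by
    intro k
    rw [← ENNReal.ofReal_pow hp0.le, ← ENNReal.ofReal_inv_of_pos (by positivity),
      ← ENNReal.ofReal_pow (by positivity), hp, ← Real.rpow_natCast, ← Real.rpow_natCast,
      ← Real.rpow_natCast, ← Real.rpow_mul zero_le_two, ← Real.rpow_neg zero_le_two,
      ← Real.rpow_mul zero_le_two, ← Real.rpow_mul zero_le_two]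
    congr 2
    push_cast
    ring
  have hC : (1 - ENNReal.ofReal p ^ 2)⁻¹ ≠ ∞ := by
    rw [ENNReal.inv_ne_top, ← ENNReal.ofReal_pow hp0.le]
    exact (tsub_pos_of_lt (ENNReal.ofReal_lt_one.2 (pow_lt_one₀ hp0.le hp1 two_ne_zero))).ne'
  refine ⟨(1 - ENNReal.ofReal p ^ 2)⁻¹.toNNReal, fun f hf => ?_⟩
  rw [ENNReal.coe_toNNReal hC]
  refine (lintegral_mono fun x => tsum_sq_le_of_geometric (ENNReal.ofReal_pos.2 hp0).ne'
    ENNReal.ofReal_ne_top _).trans_eq ?_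
  rw [lintegral_const_mul' _ _ hC,
    lintegral_tsum fun k => (((hf k).pow_const 2).const_mul _).aemeasurable]
  congr 1
  refine tsum_congr fun k => ?_
  rw [hweight, lintegral_const_mul _ ((hf k).pow_const 2)]

end SquareFunctionInequalities

section HighFrequencies

open Set

variable {a W N : ℝ} {G : ℝ → ℂ}

lemma ofReal_mul_lintegral_comp_mul_left (hN : 0 < N) {f : ℝ → ℝ≥0∞} (hf : Measurable f) :
    ENNReal.ofReal N * ∫⁻ x, f (N * x) = ∫⁻ x, f x := by
  rw [← lintegral_map hf (measurable_const_mul N), Real.map_volume_mul_left hN.ne',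
    lintegral_smul_measure, smul_eq_mul, ← mul_assoc, ← ENNReal.ofReal_mul hN.le,
    abs_of_pos (inv_pos.2 hN), mul_inv_cancel₀ hN.ne', ENNReal.ofReal_one, one_mul]

lemma osc_Ioc_scale (a : ℝ) (hN : 0 < N) (G : ℝ → ℂ) (r t : ℝ) :
    osc a (Ioc N (2 * N)) G r t
      = (N : ℂ) * osc a (Ioc 1 2) (fun x => G (N * x)) (N * r) (t * N ^ a) := by
  unfold osc
  rw [← intervalIntegral.integral_of_le (by linarith),
    ← intervalIntegral.integral_of_le one_le_two]
  have h := intervalIntegral.smul_integral_comp_mul_left (a := 1) (b := 2)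
    (fun x : ℝ => Complex.exp (Complex.I * ((r * x + t * x ^ a : ℝ) : ℂ)) * G x) N
  rw [mul_one, mul_comm N 2] at h
  rw [← h, Complex.real_smul]
  congr 1
  refine intervalIntegral.integral_congr fun x hx => ?_
  rw [uIcc_of_le one_le_two] at hx
  simp only [Real.mul_rpow hN.le (zero_le_one.trans hx.1)]
  congr 4
  ring

lemma maxOsc_Ioc_scale_le (a : ℝ) (hN : 0 < N) (G : ℝ → ℂ) (r : ℝ) :
    maxOsc a 1 (Ioc N (2 * N)) G r
      ≤ ENNReal.ofReal N * maxOsc a (N ^ a) (Ioc 1 2) (fun x => G (N * x)) (N * r) := by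
  have hNa : 0 < N ^ a := by positivity
  refine iSup_le fun ⟨t, ht₁, ht₂⟩ => ?_
  rw [osc_Ioc_scale a hN, enorm_mul, ← ofReal_norm, Complex.norm_of_nonneg hN.le]
  gcongr
  exact enorm_osc_le_maxOsc _ _ _ _ ⟨by nlinarith, by nlinarith⟩

lemma ofReal_mul_setLIntegral_Ioc_scale (hN : 0 < N) (hG : Continuous G) :
    ENNReal.ofReal N * ∫⁻ x in Ioc (1 : ℝ) 2, ‖G (N * x)‖ₑ ^ 2
      = ∫⁻ x in Ioc N (2 * N), ‖G x‖ₑ ^ 2 := by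
  rw [← lintegral_indicator measurableSet_Ioc, ← lintegral_indicator measurableSet_Ioc,
    ← ofReal_mul_lintegral_comp_mul_left hN
      ((hG.enorm.measurable.pow_const 2).indicator measurableSet_Ioc)]
  congr with x
  have hmem : N * x ∈ Ioc N (2 * N) ↔ x ∈ Ioc (1 : ℝ) 2 := by
    rw [mem_Ioc, mem_Ioc, lt_mul_iff_one_lt_right hN, mul_comm N x, mul_le_mul_iff_left₀ hN]
  simp only [indicator_apply, hmem]

lemma exists_lintegral_maxOsc_Ioc_le (ha : 0 < a) (ha1 : a ≠ 1) {ε : ℝ} (hε : 0 < ε)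
    (hε1 : ε ≤ 1) :
    ∃ C > 0, ∀ N ≥ (1 : ℝ), ∀ G : ℝ → ℂ, Continuous G →
      ∫⁻ r, maxOsc a 1 (Ioc N (2 * N)) G r ^ 2
        ≤ ENNReal.ofReal (C * (N ^ a) ^ (1 / 2 + ε)) * ∫⁻ x in Ioc N (2 * N), ‖G x‖ₑ ^ 2 := by
  obtain ⟨C, hC, hunit⟩ := exists_lintegral_maxOsc_Ioc_one_two_le ha.ne' ha1 hε hε1
  refine ⟨C, hC, fun N hN G hG => ?_⟩
  have hN0 : 0 < N := by linarith
  have hGN : Continuous fun x => G (N * x) := by fun_prop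
  set M := maxOsc a (N ^ a) (Ioc 1 2) fun x => G (N * x)
  have hM : Measurable M := measurable_maxOsc a (N ^ a) hGN.integrableOn_Ioc
  calc ∫⁻ r, maxOsc a 1 (Ioc N (2 * N)) G r ^ 2
      ≤ ∫⁻ r, (ENNReal.ofReal N * M (N * r)) ^ 2 :=
        lintegral_mono fun r => pow_le_pow_left' (maxOsc_Ioc_scale_le a hN0 G r) 2
    _ = ENNReal.ofReal N ^ 2 * ∫⁻ r, M (N * r) ^ 2 := by
        simp_rw [mul_pow]
        exact lintegral_const_mul _ (by fun_prop)
    _ = ENNReal.ofReal N * ∫⁻ r, M r ^ 2 := by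
        rw [sq, mul_assoc, ofReal_mul_lintegral_comp_mul_left hN0 (hM.pow_const 2)]
    _ ≤ ENNReal.ofReal N * (ENNReal.ofReal (C * (N ^ a) ^ (1 / 2 + ε))
          * ∫⁻ x in Ioc (1 : ℝ) 2, ‖G (N * x)‖ₑ ^ 2) := by
        gcongr
        exact hunit (N ^ a) (Real.one_le_rpow hN ha.le) _ hGN
    _ = _ := by rw [← ofReal_mul_setLIntegral_Ioc_scale hN0 hG]; ring

lemma exists_rpow_mul_lintegral_maxOsc_Ioc_le (ha : 0 < a) (ha1 : a ≠ 1) {s : ℝ}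
    (hs : a / 4 < s) :
    ∃ δ > (0 : ℝ), ∃ C : ℝ≥0, ∀ N ≥ (1 : ℝ), ∀ G : ℝ → ℂ, Continuous G →
      ENNReal.ofReal (N ^ δ) * ∫⁻ r, maxOsc a 1 (Ioc N (2 * N)) G r ^ 2
        ≤ C * ∫⁻ x in Ioc N (2 * N), ENNReal.ofReal ((1 + x ^ 2) ^ s) * ‖G x‖ₑ ^ 2 := by
  set δ := s - a / 4 with hδ
  have hδ0 : 0 < δ := sub_pos.2 hs
  set ε := min 1 (δ / a)
  have hεa : a * ε ≤ δ := (le_div_iff₀' ha).1 (min_le_right _ _)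
  obtain ⟨C, hC, hdyadic⟩ := exists_lintegral_maxOsc_Ioc_le ha ha1
    (lt_min one_pos (by positivity)) (min_le_left 1 (δ / a))
  refine ⟨δ, hδ0, C.toNNReal, fun N hN G hG => ?_⟩
  have hN0 : 0 < N := by linarith
  have hexp : N ^ δ * (C * (N ^ a) ^ (1 / 2 + ε)) ≤ C * N ^ (2 * s) := by
    rw [← Real.rpow_mul hN0.le, mul_left_comm, ← Real.rpow_add hN0]
    gcongr
    linarith
  calc ENNReal.ofReal (N ^ δ) * ∫⁻ r, maxOsc a 1 (Ioc N (2 * N)) G r ^ 2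
      ≤ ENNReal.ofReal (N ^ δ) * (ENNReal.ofReal (C * (N ^ a) ^ (1 / 2 + ε))
          * ∫⁻ x in Ioc N (2 * N), ‖G x‖ₑ ^ 2) := by gcongr; exact hdyadic N hN G hG
    _ ≤ ENNReal.ofReal (C * N ^ (2 * s)) * ∫⁻ x in Ioc N (2 * N), ‖G x‖ₑ ^ 2 := by
        rw [← mul_assoc, ← ENNReal.ofReal_mul (by positivity)]
        gcongr
    _ = ENNReal.ofReal C * ∫⁻ x in Ioc N (2 * N), ENNReal.ofReal (N ^ (2 * s)) * ‖G x‖ₑ ^ 2 := by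
        rw [ENNReal.ofReal_mul hC.le, mul_assoc, lintegral_const_mul' _ _ ENNReal.ofReal_ne_top]
    _ ≤ _ := by
        refine mul_le_mul_right (setLIntegral_mono' measurableSet_Ioc fun x hx => ?_) _
        rw [Real.rpow_mul hN0.le, Real.rpow_two]
        have := hx.1
        gcongr
        · linarith
        · nlinarith

lemma iUnion_Ioc_two_pow : ⋃ k : ℕ, Ioc ((2 : ℝ) ^ k) (2 * 2 ^ k) = Ioi 1 := by
  have h := iUnion_Ioc_map_succ_eq_Ioi (f := fun k : ℕ => (2 : ℝ) ^ k)
    (fun k => pow_le_pow_right₀ one_le_two k.zero_le) (not_bddAbove_iff.2 fun x => ?_)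
  · simpa only [Nat.succ_eq_succ, Nat.succ_eq_add_one, pow_succ', Nat.bot_eq_zero, pow_zero] using h
  · obtain ⟨k, hk⟩ := pow_unbounded_of_one_lt x (one_lt_two (α := ℝ))
    exact ⟨_, ⟨k, rfl⟩, hk⟩

lemma pairwise_disjoint_Ioc_two_pow :
    Pairwise (Function.onFun Disjoint fun k : ℕ => Ioc ((2 : ℝ) ^ k) (2 * 2 ^ k)) := by
  simpa only [Nat.succ_eq_succ, Nat.succ_eq_add_one, pow_succ'] using
    (pow_right_mono₀ one_le_two : Monotone fun k : ℕ => (2 : ℝ) ^ k).pairwise_disjoint_on_Ioc_succ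

lemma maxOsc_iUnion_le (a W : ℝ) {S : ℕ → Set ℝ} (hS : ∀ k, MeasurableSet (S k))
    (hd : Pairwise (Function.onFun Disjoint S)) (hG : IntegrableOn G (⋃ k, S k)) (r : ℝ) :
    maxOsc a W (⋃ k, S k) G r ≤ ∑' k, maxOsc a W (S k) G r := by
  refine iSup_le fun t => ?_
  have hsum : osc a (⋃ k, S k) G r t = ∑' k, osc a (S k) G r t :=
    (hasSum_integral_iUnion hS hd (integrableOn_exp_mul a hG r t)).tsum_eq.symm
  rw [hsum]
  exact enorm_tsum_le_tsum_enorm.trans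
    (ENNReal.tsum_le_tsum fun k => enorm_osc_le_maxOsc a (S k) G r t.2)

theorem exists_lintegral_maxOsc_Ioi_one_le (ha : 0 < a) (ha1 : a ≠ 1) {s : ℝ} (hs : a / 4 < s) :
    ∃ C : ℝ≥0, ∀ G : ℝ → ℂ, Continuous G → IntegrableOn G (Ioi 1) →
      ∫⁻ r, maxOsc a 1 (Ioi 1) G r ^ 2
        ≤ C * ∫⁻ x in Ioi (1 : ℝ), ENNReal.ofReal ((1 + x ^ 2) ^ s) * ‖G x‖ₑ ^ 2 := by
  obtain ⟨δ, hδ, C, hdyadic⟩ := exists_rpow_mul_lintegral_maxOsc_Ioc_le ha ha1 hs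
  obtain ⟨K, hK⟩ := exists_lintegral_tsum_sq_le (volume : Measure ℝ) hδ
  refine ⟨K * C, fun G hG hGi => ?_⟩
  rw [← iUnion_Ioc_two_pow] at hGi ⊢
  calc ∫⁻ r, maxOsc a 1 (⋃ k : ℕ, Ioc ((2 : ℝ) ^ k) (2 * 2 ^ k)) G r ^ 2
      ≤ ∫⁻ r, (∑' k : ℕ, maxOsc a 1 (Ioc ((2 : ℝ) ^ k) (2 * 2 ^ k)) G r) ^ 2 :=
        lintegral_mono fun r => pow_le_pow_left' (maxOsc_iUnion_le a 1
          (fun k => measurableSet_Ioc) pairwise_disjoint_Ioc_two_pow hGi r) 2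
    _ ≤ K * ∑' k : ℕ, ENNReal.ofReal ((2 ^ k) ^ δ)
          * ∫⁻ r, maxOsc a 1 (Ioc ((2 : ℝ) ^ k) (2 * 2 ^ k)) G r ^ 2 :=
        hK _ fun k => measurable_maxOsc a 1 hG.integrableOn_Ioc
    _ ≤ K * ∑' k : ℕ, C * ∫⁻ x in Ioc ((2 : ℝ) ^ k) (2 * 2 ^ k),
          ENNReal.ofReal ((1 + x ^ 2) ^ s) * ‖G x‖ₑ ^ 2 := by
        refine mul_le_mul_right (ENNReal.tsum_le_tsum fun k => ?_) _
        exact hdyadic (2 ^ k) (one_le_pow₀ one_le_two) G hG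
    _ = _ := by
        rw [ENNReal.tsum_mul_left, ← lintegral_iUnion (fun _ => measurableSet_Ioc)
          pairwise_disjoint_Ioc_two_pow, ENNReal.coe_mul, mul_assoc]

end HighFrequencies

section LowFrequencies

open Set

variable {a : ℝ} {S : Set ℝ} {G : ℝ → ℂ}

lemma enorm_le_enorm_zero_add_lintegral_deriv {E : Type*} [NormedAddCommGroup E]
    [NormedSpace ℝ E] [CompleteSpace E] {F F' : ℝ → E} (hF : ∀ t, HasDerivAt F (F' t) t)
    (hF' : Continuous F') {t : ℝ} (ht : t ∈ Icc (-1 : ℝ) 1) :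
    ‖F t‖ₑ ≤ ‖F 0‖ₑ + ∫⁻ τ in Icc (-1 : ℝ) 1, ‖F' τ‖ₑ := by
  have hftc : F t = F 0 + ∫ τ in (0 : ℝ)..t, F' τ := by
    rw [intervalIntegral.integral_eq_sub_of_hasDerivAt (fun τ _ => hF τ)
      (hF'.intervalIntegrable _ _), add_sub_cancel]
  have hsub : uIoc 0 t ⊆ Icc (-1 : ℝ) 1 :=
    uIoc_subset_uIcc.trans (uIcc_subset_Icc ⟨by norm_num, zero_le_one⟩ ht)
  have hint : ‖∫ τ in (0 : ℝ)..t, F' τ‖ₑ ≤ ∫⁻ τ in uIoc 0 t, ‖F' τ‖ₑ := by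
    rw [← ofReal_norm, intervalIntegral.norm_intervalIntegral_eq, ofReal_norm]
    exact enorm_integral_le_lintegral_enorm _
  rw [hftc]
  exact (enorm_add_le _ _).trans (add_le_add_right (hint.trans (lintegral_mono_set hsub)) _)

lemma hasDerivAt_osc (hG : IntegrableOn G S)
    (hG' : IntegrableOn (fun x => Complex.I * ((x ^ a : ℝ) : ℂ) * G x) S) (r t : ℝ) :
    HasDerivAt (osc a S G r) (osc a S (fun x => Complex.I * ((x ^ a : ℝ) : ℂ) * G x) r t) t := by
  refine (hasDerivAt_integral_of_dominated_loc_of_deriv_le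
    (bound := fun x => ‖Complex.I * ((x ^ a : ℝ) : ℂ) * G x‖) (s := univ)
    (F' := fun t x => Complex.exp (Complex.I * ((r * x + t * x ^ a : ℝ) : ℂ)) *
      (Complex.I * ((x ^ a : ℝ) : ℂ) * G x)) Filter.univ_mem
    (.of_forall fun t => (integrableOn_exp_mul a hG r t).aestronglyMeasurable)
    (integrableOn_exp_mul a hG r t)
    (integrableOn_exp_mul a hG' r t).aestronglyMeasurable
    (.of_forall fun x t _ => ?_) hG'.norm (.of_forall fun x t _ => ?_)).2
  · rw [norm_mul, Complex.norm_exp_I_mul_ofReal, one_mul]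
  · have hphase : HasDerivAt (fun t : ℝ => r * x + t * x ^ a) (x ^ a) t := by
      simpa using ((hasDerivAt_id t).mul_const (x ^ a)).const_add (r * x)
    convert! (hasDerivAt_exp_I_mul hphase).mul_const (G x) using 1
    ring

lemma lintegral_maxOsc_sq_le_of_osc (hG : IntegrableOn G S)
    (hG' : IntegrableOn (fun x => Complex.I * ((x ^ a : ℝ) : ℂ) * G x) S) {E : ℝ≥0∞}
    (hE : ∀ t, ∫⁻ r, ‖osc a S G r t‖ₑ ^ 2 ≤ E)
    (hE' : ∀ t, ∫⁻ r, ‖osc a S (fun x => Complex.I * ((x ^ a : ℝ) : ℂ) * G x) r t‖ₑ ^ 2 ≤ E) :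
    ∫⁻ r, maxOsc a 1 S G r ^ 2 ≤ 10 * E := by
  set H : ℝ → ℂ := fun x => Complex.I * ((x ^ a : ℝ) : ℂ) * G x
  have hcH : Continuous fun q : ℝ × ℝ => osc a S H q.1 q.2 := continuous_osc a hG'
  have hcHr : ∀ r, Continuous (osc a S H r) := fun r => hcH.comp (Continuous.prodMk_right r)
  have hmG : Measurable fun r => ‖osc a S G r 0‖ₑ ^ 2 :=
    ((continuous_osc a hG).comp (Continuous.prodMk_left 0)).enorm.measurable.pow_const 2
  have hsobolev : ∀ r, maxOsc a 1 S G r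
      ≤ ‖osc a S G r 0‖ₑ + ∫⁻ τ in Icc (-1 : ℝ) 1, ‖osc a S H r τ‖ₑ := fun r =>
    iSup_le fun t => enorm_le_enorm_zero_add_lintegral_deriv (hasDerivAt_osc hG hG' r) (hcHr r) t.2
  have hpointwise : ∀ r, maxOsc a 1 S G r ^ 2
      ≤ 2 * (‖osc a S G r 0‖ₑ ^ 2 + 2 * ∫⁻ τ in Icc (-1 : ℝ) 1, ‖osc a S H r τ‖ₑ ^ 2) := by
    intro r
    refine (pow_le_pow_left' (hsobolev r) 2).trans ((ennreal_add_sq_le _ _).trans ?_)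
    gcongr
    refine (lintegral_sq_le (hcHr r).enorm.aemeasurable).trans_eq ?_
    rw [Measure.restrict_apply_univ, Real.volume_Icc]
    norm_num
  calc ∫⁻ r, maxOsc a 1 S G r ^ 2
      ≤ ∫⁻ r, 2 * (‖osc a S G r 0‖ₑ ^ 2 + 2 * ∫⁻ τ in Icc (-1 : ℝ) 1, ‖osc a S H r τ‖ₑ ^ 2) :=
        lintegral_mono hpointwise
    _ = 2 * ((∫⁻ r, ‖osc a S G r 0‖ₑ ^ 2)
          + 2 * ∫⁻ τ in Icc (-1 : ℝ) 1, ∫⁻ r, ‖osc a S H r τ‖ₑ ^ 2) := by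
        rw [lintegral_const_mul' _ _ (by norm_num), lintegral_add_left hmG,
          lintegral_const_mul' _ _ (by norm_num),
          lintegral_lintegral_swap (hcH.enorm.measurable.pow_const 2).aemeasurable]
    _ ≤ 2 * (E + 2 * ∫⁻ _ in Icc (-1 : ℝ) 1, E) := by gcongr; exacts [hE 0, hE' _]
    _ = 10 * E := by
        rw [setLIntegral_const, Real.volume_Icc]
        norm_num
        ring

lemma osc_Ioc_zero_one_eq (a : ℝ) (G : ℝ → ℂ) (r t : ℝ) :
    osc a (Ioc 0 1) G r t = Complex.exp (Complex.I * ((-r : ℝ) : ℂ)) * osc a (Ioc 1 2)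
      (fun x => Complex.exp (Complex.I * ((t * (x - 1) ^ a : ℝ) : ℂ)) * G (x - 1)) r 0 := by
  have hshift := intervalIntegral.integral_comp_sub_right (a := 1) (b := 2) (fun x : ℝ =>
    Complex.exp (Complex.I * ((r * x + t * x ^ a : ℝ) : ℂ)) * G x) 1
  norm_num only at hshift
  unfold osc
  rw [← intervalIntegral.integral_of_le zero_le_one, ← intervalIntegral.integral_of_le one_le_two,
    ← hshift, ← intervalIntegral.integral_const_mul]
  congr with x
  rw [← mul_assoc, ← mul_assoc, ← Complex.exp_add, ← Complex.exp_add]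
  congr 2
  push_cast
  ring

lemma setLIntegral_Ioc_sub_one {f : ℝ → ℝ≥0∞} (hf : Measurable f) :
    ∫⁻ x in Ioc (1 : ℝ) 2, f (x - 1) = ∫⁻ x in Ioc (0 : ℝ) 1, f x := by
  rw [← (measurePreserving_sub_right volume (1 : ℝ)).setLIntegral_comp_preimage
    measurableSet_Ioc hf, preimage_sub_const_Ioc]
  norm_num

lemma exists_lintegral_osc_Ioc_zero_one_le (ha : 0 < a) (ha1 : a ≠ 1) :
    ∃ C : ℝ≥0, ∀ G : ℝ → ℂ, Continuous G → ∀ t,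
      ∫⁻ r, ‖osc a (Ioc 0 1) G r t‖ₑ ^ 2 ≤ C * ∫⁻ x in Ioc (0 : ℝ) 1, ‖G x‖ₑ ^ 2 := by
  obtain ⟨C, -, hunit⟩ := exists_lintegral_maxOsc_Ioc_one_two_le ha.ne' ha1 one_pos le_rfl
  refine ⟨C.toNNReal, fun G hG t => ?_⟩
  set H : ℝ → ℂ := fun x => Complex.exp (Complex.I * ((t * (x - 1) ^ a : ℝ) : ℂ)) * G (x - 1)
  have hH : Continuous H := by
    have : Continuous fun x : ℝ => (x - 1) ^ a :=
      (continuous_id.sub continuous_const).rpow_const fun _ => Or.inr ha.le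
    fun_prop
  have hHG : ∀ x, ‖H x‖ₑ = ‖G (x - 1)‖ₑ := fun x => by
    rw [← ofReal_norm, norm_mul, Complex.norm_exp_I_mul_ofReal, one_mul, ofReal_norm]
  have hosc : ∀ r, ‖osc a (Ioc 0 1) G r t‖ₑ ≤ maxOsc a 1 (Ioc 1 2) H r := fun r => by
    rw [osc_Ioc_zero_one_eq, enorm_mul, ← ofReal_norm (Complex.exp _),
      Complex.norm_exp_I_mul_ofReal, ENNReal.ofReal_one, one_mul]
    exact enorm_osc_le_maxOsc a _ H r (by simp)
  refine (lintegral_mono fun r => pow_le_pow_left' (hosc r) 2).trans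
    ((hunit 1 le_rfl H hH).trans_eq ?_)
  simp_rw [hHG, Real.one_rpow, mul_one]
  rw [setLIntegral_Ioc_sub_one (hG.enorm.measurable.pow_const 2)]
  rfl

lemma exists_lintegral_maxOsc_Ioc_zero_one_le (ha : 0 < a) (ha1 : a ≠ 1) :
    ∃ C : ℝ≥0, ∀ G : ℝ → ℂ, Continuous G →
      ∫⁻ r, maxOsc a 1 (Ioc 0 1) G r ^ 2 ≤ C * ∫⁻ x in Ioc (0 : ℝ) 1, ‖G x‖ₑ ^ 2 := by
  obtain ⟨C, hfixed⟩ := exists_lintegral_osc_Ioc_zero_one_le ha ha1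
  refine ⟨10 * C, fun G hG => ?_⟩
  have hG' : Continuous fun x => Complex.I * ((x ^ a : ℝ) : ℂ) * G x := by
    have : Continuous fun x : ℝ => x ^ a := continuous_id.rpow_const fun _ => Or.inr ha.le
    fun_prop
  have hle : ∫⁻ x in Ioc (0 : ℝ) 1, ‖Complex.I * ((x ^ a : ℝ) : ℂ) * G x‖ₑ ^ 2
      ≤ ∫⁻ x in Ioc (0 : ℝ) 1, ‖G x‖ₑ ^ 2 := by
    refine setLIntegral_mono' measurableSet_Ioc fun x hx => pow_le_pow_left' ?_ 2
    rw [enorm_le_iff_norm_le, norm_mul, norm_mul, Complex.norm_I, one_mul,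
      Complex.norm_of_nonneg (Real.rpow_nonneg hx.1.le a)]
    exact mul_le_of_le_one_left (norm_nonneg _) (Real.rpow_le_one hx.1.le hx.2 ha.le)
  rw [ENNReal.coe_mul, mul_assoc]
  exact lintegral_maxOsc_sq_le_of_osc hG.integrableOn_Ioc hG'.integrableOn_Ioc (hfixed G hG)
    fun t => (hfixed _ hG' t).trans (mul_le_mul_right hle _)

end LowFrequencies

section HalfLine

open Set

variable {a : ℝ}

lemma maxOsc_union_le (a W : ℝ) {S T : Set ℝ} {G : ℝ → ℂ} (hd : Disjoint S T)
    (hT : MeasurableSet T) (hS' : IntegrableOn G S) (hT' : IntegrableOn G T) (r : ℝ) :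
    maxOsc a W (S ∪ T) G r ≤ maxOsc a W S G r + maxOsc a W T G r := by
  refine iSup_le fun t => ?_
  have hsplit : osc a (S ∪ T) G r t = osc a S G r t + osc a T G r t :=
    setIntegral_union hd hT (integrableOn_exp_mul a hS' r t) (integrableOn_exp_mul a hT' r t)
  rw [hsplit]
  exact (enorm_add_le _ _).trans (add_le_add (enorm_osc_le_maxOsc a S G r t.2)
    (enorm_osc_le_maxOsc a T G r t.2))

theorem exists_lintegral_maxOsc_Ioi_zero_le (ha : 0 < a) (ha1 : a ≠ 1) {s : ℝ} (hs : a / 4 < s) :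
    ∃ C : ℝ≥0, ∀ G : ℝ → ℂ, Continuous G → IntegrableOn G (Ioi 0) →
      ∫⁻ r, maxOsc a 1 (Ioi 0) G r ^ 2
        ≤ C * ∫⁻ x in Ioi (0 : ℝ), ENNReal.ofReal ((1 + x ^ 2) ^ s) * ‖G x‖ₑ ^ 2 := by
  obtain ⟨C₁, hlow⟩ := exists_lintegral_maxOsc_Ioc_zero_one_le ha ha1
  obtain ⟨C₂, hhigh⟩ := exists_lintegral_maxOsc_Ioi_one_le ha ha1 hs
  refine ⟨2 * (C₁ + C₂), fun G hG hGi => ?_⟩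
  set E := ∫⁻ x in Ioi (0 : ℝ), ENNReal.ofReal ((1 + x ^ 2) ^ s) * ‖G x‖ₑ ^ 2
  have hGi₁ : IntegrableOn G (Ioc 0 1) := hG.integrableOn_Ioc
  have hGi₂ : IntegrableOn G (Ioi 1) := hGi.mono_set (Ioi_subset_Ioi zero_le_one)
  have hE₁ : ∫⁻ x in Ioc (0 : ℝ) 1, ‖G x‖ₑ ^ 2 ≤ E := by
    refine (lintegral_mono fun x => ?_).trans (lintegral_mono_set Ioc_subset_Ioi_self)
    refine le_mul_of_one_le_left (by positivity) (ENNReal.one_le_ofReal.2 ?_)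
    exact Real.one_le_rpow (by nlinarith [sq_nonneg x]) (by linarith)
  have hE₂ : ∫⁻ x in Ioi (1 : ℝ), ENNReal.ofReal ((1 + x ^ 2) ^ s) * ‖G x‖ₑ ^ 2 ≤ E :=
    lintegral_mono_set (Ioi_subset_Ioi zero_le_one)
  calc ∫⁻ r, maxOsc a 1 (Ioi 0) G r ^ 2
      ≤ ∫⁻ r, 2 * (maxOsc a 1 (Ioc 0 1) G r ^ 2 + maxOsc a 1 (Ioi 1) G r ^ 2) := by
        refine lintegral_mono fun r => (pow_le_pow_left' ?_ 2).trans (ennreal_add_sq_le _ _)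
        rw [← Ioc_union_Ioi_eq_Ioi (zero_le_one (α := ℝ))]
        exact maxOsc_union_le a 1 (Ioc_disjoint_Ioi le_rfl) measurableSet_Ioi hGi₁ hGi₂ r
    _ = 2 * ((∫⁻ r, maxOsc a 1 (Ioc 0 1) G r ^ 2) + ∫⁻ r, maxOsc a 1 (Ioi 1) G r ^ 2) := by
        rw [lintegral_const_mul' _ _ (by norm_num),
          lintegral_add_left ((measurable_maxOsc a 1 hGi₁).pow_const 2)]
    _ ≤ 2 * (C₁ * E + C₂ * E) := by
        gcongr
        · exact (hlow G hG).trans (mul_le_mul_right hE₁ _)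
        · exact (hhigh G hG hGi₂).trans (mul_le_mul_right hE₂ _)
    _ = _ := by push_cast; ring

end HalfLine

section SchurTest

open Set

variable {α β : Type*} [MeasurableSpace α] [MeasurableSpace β]

lemma lintegral_mul_sq_le_weighted {ν : Measure β} {k f w : β → ℝ≥0∞} (hk : AEMeasurable k ν)
    (hf : AEMeasurable f ν) (hw : AEMeasurable w ν) (hw0 : ∀ᵐ y ∂ν, w y ≠ 0)
    (hw' : ∀ᵐ y ∂ν, w y ≠ ∞) :
    (∫⁻ y, k y * f y ∂ν) ^ 2 ≤ (∫⁻ y, k y * w y ∂ν) * ∫⁻ y, k y * (f y ^ 2 * (w y)⁻¹) ∂ν := by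
  have hsq : ∀ z : ℝ≥0∞, (z ^ (1 / 2 : ℝ)) ^ 2 = z := fun z => by
    rw [← ENNReal.rpow_two, ← ENNReal.rpow_mul]
    norm_num
  have hfactor : ∫⁻ y, k y * f y ∂ν = ∫⁻ y, (k y * w y) ^ (1 / 2 : ℝ)
      * (k y * (f y ^ 2 * (w y)⁻¹)) ^ (1 / 2 : ℝ) ∂ν := by
    refine lintegral_congr_ae ?_
    filter_upwards [hw0, hw'] with y h0 h1
    rw [← ENNReal.mul_rpow_of_nonneg _ _ (by norm_num)]
    have hcancel : k y * w y * (k y * (f y ^ 2 * (w y)⁻¹)) = (k y * f y) ^ 2 := by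
      rw [show k y * w y * (k y * (f y ^ 2 * (w y)⁻¹)) = (k y * f y) ^ 2 * (w y * (w y)⁻¹) by ring,
        ENNReal.mul_inv_cancel h0 h1, mul_one]
    rw [hcancel, ← ENNReal.rpow_two, ← ENNReal.rpow_mul]
    norm_num
  rw [hfactor]
  refine (lintegral_mul_sq_le (by fun_prop) (by fun_prop)).trans_eq ?_
  simp_rw [hsq]

theorem lintegral_lintegral_mul_sq_le_of_schur {μ : Measure α} {ν : Measure β} [SFinite μ]
    [SFinite ν] {k : α → β → ℝ≥0∞} (hk : Measurable (Function.uncurry k)) {v : α → ℝ≥0∞}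
    {w : β → ℝ≥0∞} (hv : Measurable v) (hw : Measurable w) (hw0 : ∀ᵐ y ∂ν, w y ≠ 0)
    (hw' : ∀ᵐ y ∂ν, w y ≠ ∞) {A B : ℝ≥0} (hA : ∀ᵐ x ∂μ, ∫⁻ y, k x y * w y ∂ν ≤ A * v x)
    (hB : ∀ᵐ y ∂ν, ∫⁻ x, k x y * v x ∂μ ≤ B * w y) {f : β → ℝ≥0∞} (hf : Measurable f) :
    ∫⁻ x, (∫⁻ y, k x y * f y ∂ν) ^ 2 ∂μ ≤ A * B * ∫⁻ y, f y ^ 2 ∂ν := by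
  have hkx : ∀ x, Measurable (k x) := fun x => hk.comp measurable_prodMk_left
  have hky : ∀ y, Measurable fun x => k x y := fun y => hk.comp measurable_prodMk_right
  have hpointwise : ∀ᵐ x ∂μ, (∫⁻ y, k x y * f y ∂ν) ^ 2
      ≤ ∫⁻ y, A * (k x y * v x) * (f y ^ 2 * (w y)⁻¹) ∂ν := by
    filter_upwards [hA] with x hx
    refine (lintegral_mul_sq_le_weighted (hkx x).aemeasurable hf.aemeasurable hw.aemeasurable
      hw0 hw').trans ((mul_le_mul_left hx _).trans_eq ?_)
    rw [← lintegral_const_mul _ (by have := hkx x; fun_prop)]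
    exact lintegral_congr fun y => by ring
  calc ∫⁻ x, (∫⁻ y, k x y * f y ∂ν) ^ 2 ∂μ
      ≤ ∫⁻ x, ∫⁻ y, A * (k x y * v x) * (f y ^ 2 * (w y)⁻¹) ∂ν ∂μ := lintegral_mono_ae hpointwise
    _ = ∫⁻ y, ∫⁻ x, A * (k x y * v x) * (f y ^ 2 * (w y)⁻¹) ∂μ ∂ν :=
        lintegral_lintegral_swap (by unfold Function.uncurry at *; fun_prop)
    _ = ∫⁻ y, A * (f y ^ 2 * (w y)⁻¹) * ∫⁻ x, k x y * v x ∂μ ∂ν := by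
        refine lintegral_congr fun y => ?_
        rw [← lintegral_const_mul (f := fun x => k x y * v x) _ ((hky y).mul hv)]
        exact lintegral_congr fun x => by ring
    _ ≤ ∫⁻ y, A * B * f y ^ 2 ∂ν := by
        refine lintegral_mono_ae ?_
        filter_upwards [hB, hw0, hw'] with y hy h0 h1
        refine (mul_le_mul_right hy _).trans_eq ?_
        rw [show A * (f y ^ 2 * (w y)⁻¹) * (B * w y) = A * B * f y ^ 2 * (w y * (w y)⁻¹) by ring,
          ENNReal.mul_inv_cancel h0 h1, mul_one]
    _ = A * B * ∫⁻ y, f y ^ 2 ∂ν := lintegral_const_mul _ (hf.pow_const 2)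

end SchurTest

section HardyInequality

open Set

lemma setLIntegral_Ioc_zero_rpow {p c : ℝ} (hp : -1 < p) (hc : 0 ≤ c) :
    ∫⁻ x in Ioc 0 c, ENNReal.ofReal (x ^ p) = ENNReal.ofReal (c ^ (p + 1) / (p + 1)) := by
  have hint : IntegrableOn (fun x : ℝ => x ^ p) (Ioc 0 c) :=
    (intervalIntegrable_iff_integrableOn_Ioc_of_le hc).1
      (intervalIntegral.intervalIntegrable_rpow' hp)
  rw [← ofReal_integral_eq_lintegral_ofReal hint ((ae_restrict_iff' measurableSet_Ioc).2
      (.of_forall fun x hx => Real.rpow_nonneg hx.1.le p)),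
    ← intervalIntegral.integral_of_le hc, integral_rpow (Or.inl hp),
    Real.zero_rpow (by linarith), sub_zero]

lemma setLIntegral_Ioi_rpow {p c : ℝ} (hp : p < -1) (hc : 0 < c) :
    ∫⁻ x in Ioi c, ENNReal.ofReal (x ^ p) = ENNReal.ofReal (-c ^ (p + 1) / (p + 1)) := by
  rw [← ofReal_integral_eq_lintegral_ofReal (integrableOn_Ioi_rpow_of_lt hp hc)
      ((ae_restrict_iff' measurableSet_Ioi).2
      (.of_forall fun x hx => Real.rpow_nonneg (hc.trans hx).le p)),
    integral_Ioi_rpow_of_lt hp hc]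

lemma setLIntegral_Ioi_min_one_mul_rpow_le {r : ℝ} (hr : 0 < r) :
    ∫⁻ ρ in Ioi (0 : ℝ), ENNReal.ofReal (min 1 (1 / (r * ρ))) * ENNReal.ofReal (ρ ^ (-(1 / 2) : ℝ))
      ≤ 4 * ENNReal.ofReal (r ^ (-(1 / 2) : ℝ)) := by
  have hsmall : ∫⁻ ρ in Ioc 0 r⁻¹, ENNReal.ofReal (min 1 (1 / (r * ρ)))
      * ENNReal.ofReal (ρ ^ (-(1 / 2) : ℝ)) ≤ ENNReal.ofReal (2 * r ^ (-(1 / 2) : ℝ)) := by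
    calc _ ≤ ∫⁻ ρ in Ioc 0 r⁻¹, ENNReal.ofReal (ρ ^ (-(1 / 2) : ℝ)) :=
          lintegral_mono fun ρ => mul_le_of_le_one_left (by positivity)
            (ENNReal.ofReal_le_one.2 (min_le_left _ _))
      _ = _ := by
          rw [setLIntegral_Ioc_zero_rpow (by norm_num) (by positivity), Real.inv_rpow hr.le,
            ← Real.rpow_neg hr.le]
          congr 1
          norm_num
          ring
  have hlarge : ∫⁻ ρ in Ioi r⁻¹, ENNReal.ofReal (min 1 (1 / (r * ρ)))
      * ENNReal.ofReal (ρ ^ (-(1 / 2) : ℝ)) ≤ ENNReal.ofReal (2 * r ^ (-(1 / 2) : ℝ)) := by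
    calc _ ≤ ∫⁻ ρ in Ioi r⁻¹, ENNReal.ofReal r⁻¹ * ENNReal.ofReal (ρ ^ (-(3 / 2) : ℝ)) := by
          refine setLIntegral_mono' measurableSet_Ioi fun ρ hρ => ?_
          have hρ0 : 0 < ρ := (inv_pos.2 hr).trans hρ
          rw [← ENNReal.ofReal_mul (by positivity), ← ENNReal.ofReal_mul (by positivity),
            show (-(3 / 2) : ℝ) = -1 + -(1 / 2) by norm_num, Real.rpow_add hρ0,
            Real.rpow_neg_one, ← mul_assoc, ← mul_inv, ← one_div]
          gcongr
          exact min_le_right _ _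
      _ = _ := by
          rw [lintegral_const_mul' _ _ ENNReal.ofReal_ne_top,
            setLIntegral_Ioi_rpow (by norm_num) (by positivity),
            ← ENNReal.ofReal_mul (by positivity), Real.inv_rpow hr.le, ← Real.rpow_neg hr.le,
            show (-(1 / 2) : ℝ) = -1 + 1 / 2 by norm_num, Real.rpow_add hr, Real.rpow_neg_one]
          congr 1
          norm_num
          ring
  rw [← Ioc_union_Ioi_eq_Ioi (inv_pos.2 hr).le,
    lintegral_union measurableSet_Ioi (Ioc_disjoint_Ioi le_rfl)]
  refine (add_le_add hsmall hlarge).trans_eq ?_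
  rw [ENNReal.ofReal_mul zero_le_two, ← add_mul]
  norm_num

theorem setLIntegral_sq_setLIntegral_min_one_mul_le {f : ℝ → ℝ≥0∞} (hf : Measurable f) :
    ∫⁻ r in Ioi (0 : ℝ), (∫⁻ ρ in Ioi (0 : ℝ), ENNReal.ofReal (min 1 (1 / (r * ρ))) * f ρ) ^ 2
      ≤ 16 * ∫⁻ ρ in Ioi (0 : ℝ), f ρ ^ 2 := by
  have hA : ∀ᵐ r ∂volume.restrict (Ioi (0 : ℝ)), ∫⁻ ρ in Ioi (0 : ℝ),
      ENNReal.ofReal (min 1 (1 / (r * ρ))) * ENNReal.ofReal (ρ ^ (-(1 / 2) : ℝ))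
        ≤ (4 : ℝ≥0) * ENNReal.ofReal (r ^ (-(1 / 2) : ℝ)) :=
    (ae_restrict_iff' measurableSet_Ioi).2
      (.of_forall fun r hr => setLIntegral_Ioi_min_one_mul_rpow_le hr)
  rw [show (16 : ℝ≥0∞) = (4 : ℝ≥0) * (4 : ℝ≥0) by norm_num]
  exact lintegral_lintegral_mul_sq_le_of_schur (μ := volume.restrict (Ioi (0 : ℝ)))
    (ν := volume.restrict (Ioi (0 : ℝ))) (k := fun r ρ => ENNReal.ofReal (min 1 (1 / (r * ρ))))
    (by unfold Function.uncurry; fun_prop) (by fun_prop) (by fun_prop)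
    ((ae_restrict_iff' measurableSet_Ioi).2 (.of_forall fun ρ hρ =>
      (ENNReal.ofReal_pos.2 (Real.rpow_pos_of_pos hρ _)).ne'))
    (.of_forall fun _ => ENNReal.ofReal_ne_top) hA (by simpa only [mul_comm] using hA) hf

end HardyInequality

section PerturbedHarmonicOscillator

open Set

lemma hasDerivAt_const_div (K : ℝ) {u : ℝ} (hu : u ≠ 0) :
    HasDerivAt (fun u => K / u) (-K / u ^ 2) u := by
  convert! (hasDerivAt_inv hu).const_mul K using 1
  ring

lemma norm_sub_le_div_of_norm_deriv_le {E : Type*} [NormedAddCommGroup E] [NormedSpace ℝ E]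
    {z z' : ℝ → E} {K : ℝ} (hz : ∀ u, 1 ≤ u → HasDerivAt z (z' u) u)
    (hz' : ∀ u, 1 ≤ u → ‖z' u‖ ≤ K / u ^ 2) {x y : ℝ} (hx : 1 ≤ x) (hxy : x ≤ y) :
    ‖z y - z x‖ ≤ K / x := by
  have hK : 0 ≤ K := by simpa using (norm_nonneg _).trans (hz' 1 le_rfl)
  have hderiv : ∀ u, 1 ≤ u → HasDerivAt (fun u => K / x - K / u) (K / u ^ 2) u := fun u hu => by
    simpa only [neg_div, neg_neg] using
      (hasDerivAt_const_div K (by linarith : u ≠ 0)).const_sub (K / x)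
  have h := image_norm_le_of_norm_deriv_right_le_deriv_boundary' (a := x) (b := y)
    (f := fun u => z u - z x) (B := fun u => K / x - K / u)
    (HasDerivAt.continuousOn fun u hu => (hz u (hx.trans hu.1)).sub_const _)
    (fun u hu => ((hz u (hx.trans hu.1)).sub_const _).hasDerivWithinAt) (by simp)
    (HasDerivAt.continuousOn fun u hu => hderiv u (hx.trans hu.1))
    (fun u hu => (hderiv u (hx.trans hu.1)).hasDerivWithinAt)
    (fun u hu => hz' u (hx.trans hu.1)) ⟨hxy, le_rfl⟩
  exact h.trans (sub_le_self _ (div_nonneg hK (by linarith)))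

lemma exists_limit_of_norm_deriv_le {E : Type*} [NormedAddCommGroup E] [NormedSpace ℝ E]
    [CompleteSpace E] {z z' : ℝ → E} {K : ℝ} (hz : ∀ u, 1 ≤ u → HasDerivAt z (z' u) u)
    (hz' : ∀ u, 1 ≤ u → ‖z' u‖ ≤ K / u ^ 2) : ∃ L : E, ∀ u, 1 ≤ u → ‖z u - L‖ ≤ K / u := by
  have hinc {x y : ℝ} (hx : 1 ≤ x) (hxy : x ≤ y) := norm_sub_le_div_of_norm_deriv_le hz hz' hx hxy
  have hcauchy : CauchySeq fun n : ℕ => z (n + 1) := by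
    refine cauchySeq_of_le_tendsto_0' (fun n : ℕ => K / ((n : ℝ) + 1)) (fun n m hnm => ?_) ?_
    · rw [dist_comm, dist_eq_norm]
      exact hinc (by simp) (by gcongr)
    · simpa [div_eq_mul_inv] using
        (tendsto_one_div_add_atTop_nhds_zero_nat (𝕜 := ℝ)).const_mul K
  obtain ⟨L, hL⟩ := cauchySeq_tendsto_of_complete hcauchy
  refine ⟨L, fun u hu => ?_⟩
  rw [norm_sub_rev]
  refine le_of_tendsto (hL.sub_const (z u)).norm ?_
  filter_upwards [Filter.eventually_ge_atTop ⌈u⌉₊] with n hn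
  exact hinc hu ((Nat.le_of_ceil_le hn).trans (by simp))

variable {v v₁ : ℝ → ℂ} {Q : ℝ → ℝ} {K : ℝ}

lemma energy_deriv_nonpos {x y : ℂ} {q k e : ℝ} (he : 0 ≤ e) (hq : |q| ≤ k) :
    (2 * ⟪x, y⟫_ℝ + 2 * ⟪y, -x + (q : ℂ) * x⟫_ℝ) * e + (‖x‖ ^ 2 + ‖y‖ ^ 2) * (e * -k) ≤ 0 := by
  have hinner : ⟪y, -x + (q : ℂ) * x⟫_ℝ = -⟪x, y⟫_ℝ + q * ⟪x, y⟫_ℝ := by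
    rw [inner_add_right y, inner_neg_right y, ← Complex.real_smul, real_inner_smul_right,
      real_inner_comm x y]
  have hcross : q * ⟪x, y⟫_ℝ ≤ k * (‖x‖ * ‖y‖) := by
    refine (le_abs_self _).trans ?_
    rw [abs_mul]
    exact mul_le_mul hq (abs_real_inner_le_norm x y) (abs_nonneg _) ((abs_nonneg q).trans hq)
  have hamgm : k * (2 * (‖x‖ * ‖y‖)) ≤ k * (‖x‖ ^ 2 + ‖y‖ ^ 2) := by
    have : 0 ≤ k := (abs_nonneg q).trans hq
    gcongr
    nlinarith [sq_nonneg (‖x‖ - ‖y‖)]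
  rw [hinner, show (2 * ⟪x, y⟫_ℝ + 2 * (-⟪x, y⟫_ℝ + q * ⟪x, y⟫_ℝ)) * e
      + (‖x‖ ^ 2 + ‖y‖ ^ 2) * (e * -k)
    = e * (2 * (q * ⟪x, y⟫_ℝ) - k * (‖x‖ ^ 2 + ‖y‖ ^ 2)) by ring]
  exact mul_nonpos_of_nonneg_of_nonpos he (by linarith)

-- The energy `(‖v‖² + ‖v'‖²) exp (K / u)` is nonincreasing.
lemma exists_norm_le_of_ode (hv : ∀ u, 1 ≤ u → HasDerivAt v (v₁ u) u)
    (hv₁ : ∀ u, 1 ≤ u → HasDerivAt v₁ (-v u + (Q u : ℂ) * v u) u)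
    (hQ : ∀ u, 1 ≤ u → |Q u| ≤ K / u ^ 2) : ∃ M, ∀ u, 1 ≤ u → ‖v u‖ ≤ M := by
  have hK : 0 ≤ K := by simpa using (abs_nonneg _).trans (hQ 1 le_rfl)
  set E : ℝ → ℝ := fun u => (‖v u‖ ^ 2 + ‖v₁ u‖ ^ 2) * Real.exp (K / u)
  have hE : ∀ u, 1 ≤ u → HasDerivAt E ((2 * ⟪v u, v₁ u⟫_ℝ
      + 2 * ⟪v₁ u, -v u + (Q u : ℂ) * v u⟫_ℝ) * Real.exp (K / u)
      + (‖v u‖ ^ 2 + ‖v₁ u‖ ^ 2) * (Real.exp (K / u) * -(K / u ^ 2))) u := fun u hu => by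
    rw [← neg_div]
    exact ((hv u hu).norm_sq.add (hv₁ u hu).norm_sq).mul
      (hasDerivAt_const_div K (by linarith)).exp
  have hanti : AntitoneOn E (Ici 1) := by
    refine antitoneOn_of_deriv_nonpos (convex_Ici 1) (HasDerivAt.continuousOn hE)
      (fun u hu => ?_) (fun u hu => ?_) <;> rw [interior_Ici] at hu
    · exact (hE u hu.le).differentiableAt.differentiableWithinAt
    · rw [(hE u hu.le).deriv]
      exact energy_deriv_nonpos (Real.exp_pos _).le (hQ u hu.le)
  refine ⟨√(E 1), fun u hu => Real.le_sqrt_of_sq_le ?_⟩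
  have hEu : ‖v u‖ ^ 2 ≤ E u :=
    (le_add_of_nonneg_right (sq_nonneg _)).trans
      (le_mul_of_one_le_right (by positivity)
        (Real.one_le_exp (div_nonneg hK (zero_le_one.trans hu))))
  exact hEu.trans (hanti self_mem_Ici hu hu)

lemma exists_limit_exp_mul_of_ode {σ M : ℝ} (hσ : σ ^ 2 = 1)
    (hv : ∀ u, 1 ≤ u → HasDerivAt v (v₁ u) u)
    (hv₁ : ∀ u, 1 ≤ u → HasDerivAt v₁ (-v u + (Q u : ℂ) * v u) u)
    (hQ : ∀ u, 1 ≤ u → |Q u| ≤ K / u ^ 2) (hM : ∀ u, 1 ≤ u → ‖v u‖ ≤ M) :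
    ∃ L : ℂ, ∀ u, 1 ≤ u → ‖Complex.exp (Complex.I * ((-σ * u : ℝ) : ℂ))
      * (v₁ u + Complex.I * σ * v u) - L‖ ≤ K * M / u := by
  have hσ' : (σ : ℂ) ^ 2 = 1 := by exact_mod_cast hσ
  refine exists_limit_of_norm_deriv_le
    (z' := fun u => Complex.exp (Complex.I * ((-σ * u : ℝ) : ℂ)) * ((Q u : ℂ) * v u))
    (fun u hu => ?_) (fun u hu => ?_)
  · have hphase : HasDerivAt (fun u : ℝ => -σ * u) (-σ) u := by
      simpa using (hasDerivAt_id u).const_mul (-σ)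
    convert! (hasDerivAt_exp_I_mul hphase).mul
      ((hv₁ u hu).add ((hv u hu).const_mul (Complex.I * σ))) using 1
    simp only [Pi.add_apply]
    push_cast
    linear_combination Complex.exp (Complex.I * (-σ * u)) * v u * (σ ^ 2 * Complex.I_sq - hσ')
  · rw [norm_mul, Complex.norm_exp_I_mul_ofReal, one_mul, norm_mul, Complex.norm_real,
      Real.norm_eq_abs, mul_div_right_comm]
    exact mul_le_mul (hQ u hu) (hM u hu) (norm_nonneg _) ((abs_nonneg _).trans (hQ u hu))

theorem exists_asymptotics_of_ode (hv : ∀ u, 1 ≤ u → HasDerivAt v (v₁ u) u)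
    (hv₁ : ∀ u, 1 ≤ u → HasDerivAt v₁ (-v u + (Q u : ℂ) * v u) u)
    (hQ : ∀ u, 1 ≤ u → |Q u| ≤ K / u ^ 2) :
    ∃ A B : ℂ, ∃ C : ℝ, ∀ u : ℝ, 1 ≤ u →
      ‖v u - A * Complex.exp (Complex.I * (u : ℂ)) - B * Complex.exp (Complex.I * ((-u : ℝ) : ℂ))‖
        ≤ C / u := by
  obtain ⟨M, hM⟩ := exists_norm_le_of_ode hv hv₁ hQ
  obtain ⟨L, hL⟩ := exists_limit_exp_mul_of_ode (σ := 1) (by norm_num) hv hv₁ hQ hM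
  obtain ⟨L', hL'⟩ := exists_limit_exp_mul_of_ode (σ := -1) (by norm_num) hv hv₁ hQ hM
  refine ⟨-Complex.I / 2 * L, Complex.I / 2 * L', K * M, fun u hu => ?_⟩
  have hplus := hL u hu
  have hminus := hL' u hu
  simp only [neg_neg, one_mul, neg_mul, Complex.ofReal_one, Complex.ofReal_neg, mul_one, mul_neg,
    ← sub_eq_add_neg] at hplus hminus ⊢
  set e := Complex.exp (Complex.I * (u : ℂ)) 
  set e' := Complex.exp (-(Complex.I * (u : ℂ)))
  have hee' : e * e' = 1 := by rw [← Complex.exp_add, add_neg_cancel, Complex.exp_zero]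
  have hnorm : ‖e‖ = 1 := Complex.norm_exp_I_mul_ofReal u
  have hnorm' : ‖e'‖ = 1 := by simpa [hnorm] using congrArg norm hee'
  have hsplit : v u - -Complex.I / 2 * L * e - Complex.I / 2 * L' * e'
      = -Complex.I / 2 * (e * (e' * (v₁ u + Complex.I * v u) - L))
        + Complex.I / 2 * (e' * (e * (v₁ u - Complex.I * v u) - L')) := by
    linear_combination (v u * Complex.I ^ 2) * hee' + v u * Complex.I_sq
  have hI : ‖-Complex.I / 2‖ = 1 / 2 := by simp
  have hI' : ‖Complex.I / 2‖ = 1 / 2 := by simp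
  rw [hsplit]
  refine (norm_add_le _ _).trans ?_
  rw [norm_mul, norm_mul, norm_mul (Complex.I / 2), norm_mul e', hI, hI', hnorm, hnorm']
  linarith

end PerturbedHarmonicOscillator

section BesselAsymptotics

open Set

/-- The integrand of `besselIntegral`. -/
def besselIntegrand (m j : ℕ) (u θ : ℝ) : ℂ :=
  (Complex.I * (Real.cos θ : ℂ)) ^ j *
    (Complex.exp (Complex.I * ((u * Real.cos θ : ℝ) : ℂ)) * ((Real.sin θ ^ m : ℝ) : ℂ))

/-- The `j`-th derivative in `u` of Poisson's integral `∫₀^π e^{iu cos θ} sin^m θ dθ`, which is a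
constant multiple of `u^{-m/2} J_{m/2}(u)`. -/
def besselIntegral (m j : ℕ) (u : ℝ) : ℂ :=
  ∫ θ in (0 : ℝ)..π, besselIntegrand m j u θ

lemma continuous_besselIntegrand (m j : ℕ) (u : ℝ) : Continuous (besselIntegrand m j u) := by
  unfold besselIntegrand
  fun_prop

lemma norm_besselIntegrand_le_one (m j : ℕ) (u θ : ℝ) : ‖besselIntegrand m j u θ‖ ≤ 1 := by
  rw [besselIntegrand, norm_mul, norm_mul, norm_pow, norm_mul, Complex.norm_I,
    Complex.norm_exp_I_mul_ofReal, Complex.norm_real, Complex.norm_real, norm_pow, one_mul,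
    one_mul, Real.norm_eq_abs, Real.norm_eq_abs]
  exact mul_le_one₀ (pow_le_one₀ (abs_nonneg _) (Real.abs_cos_le_one θ)) (by positivity)
    (pow_le_one₀ (abs_nonneg _) (Real.abs_sin_le_one θ))

lemma norm_besselIntegral_le_pi (m j : ℕ) (u : ℝ) : ‖besselIntegral m j u‖ ≤ π := by
  simpa [besselIntegral, abs_of_pos Real.pi_pos] using
    intervalIntegral.norm_integral_le_of_norm_le_const (a := 0) (b := π) (C := 1)
      fun θ _ => norm_besselIntegrand_le_one m j u θ

lemma hasDerivAt_besselIntegral (m j : ℕ) (u : ℝ) :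
    HasDerivAt (besselIntegral m j) (besselIntegral m (j + 1) u) u := by
  refine (intervalIntegral.hasDerivAt_integral_of_dominated_loc_of_deriv_le (bound := fun _ => 1)
    (s := univ) (F' := fun u θ => besselIntegrand m (j + 1) u θ) Filter.univ_mem
    (.of_forall fun u => (continuous_besselIntegrand m j u).aestronglyMeasurable)
    ((continuous_besselIntegrand m j u).intervalIntegrable _ _)
    (continuous_besselIntegrand m (j + 1) u).aestronglyMeasurable
    (.of_forall fun θ _ u _ => norm_besselIntegrand_le_one m (j + 1) u θ)
    intervalIntegrable_const (.of_forall fun θ _ u _ => ?_)).2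
  have hphase : HasDerivAt (fun u : ℝ => u * Real.cos θ) (Real.cos θ) u := by
    simpa using (hasDerivAt_id u).mul_const (Real.cos θ)
  unfold besselIntegrand
  convert! ((hasDerivAt_exp_I_mul hphase).mul_const ((Real.sin θ ^ m : ℝ) : ℂ)).const_mul
    ((Complex.I * (Real.cos θ : ℂ)) ^ j) using 1
  ring

lemma hasDerivAt_exp_I_mul_cos_mul_sin_pow (m : ℕ) (u θ : ℝ) :
    HasDerivAt (fun θ : ℝ => Complex.I * (Complex.exp (Complex.I * ((u * Real.cos θ : ℝ) : ℂ)) *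
        ((Real.sin θ ^ (m + 1) : ℝ) : ℂ)))
      ((u : ℂ) * (besselIntegrand m 0 u θ + besselIntegrand m 2 u θ)
        + ((m : ℂ) + 1) * besselIntegrand m 1 u θ) θ := by
  have hphase : HasDerivAt (fun θ : ℝ => u * Real.cos θ) (u * -Real.sin θ) θ :=
    (Real.hasDerivAt_cos θ).const_mul u
  have hpow := ((Real.hasDerivAt_sin θ).pow (m + 1)).ofReal_comp
  convert! ((hasDerivAt_exp_I_mul hphase).mul hpow).const_mul Complex.I using 1
  have hsin : Complex.sin θ ^ 2 = 1 - Complex.cos θ ^ 2 := Complex.sin_sq θ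
  rw [Pi.pow_apply]
  unfold besselIntegrand
  push_cast
  linear_combination ((u : ℂ) * Complex.exp (Complex.I * ((u : ℂ) * Complex.cos (θ : ℂ))) *
    Complex.sin (θ : ℂ) ^ m) *
    ((Complex.cos (θ : ℂ) ^ 2 + Complex.sin (θ : ℂ) ^ 2) * Complex.I_sq - hsin)

lemma besselIntegral_ode (m : ℕ) (u : ℝ) :
    (u : ℂ) * (besselIntegral m 0 u + besselIntegral m 2 u)
      + ((m : ℂ) + 1) * besselIntegral m 1 u = 0 := by
  have hint : ∀ j, IntervalIntegrable (besselIntegrand m j u) volume 0 π := fun j =>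
    (continuous_besselIntegrand m j u).intervalIntegrable _ _
  have h := intervalIntegral.integral_eq_sub_of_hasDerivAt (a := 0) (b := π)
    (fun θ _ => hasDerivAt_exp_I_mul_cos_mul_sin_pow m u θ)
    ((((hint 0).add (hint 2)).const_mul _).add ((hint 1).const_mul _))
  rw [intervalIntegral.integral_add (((hint 0).add (hint 2)).const_mul _) ((hint 1).const_mul _),
    intervalIntegral.integral_const_mul, intervalIntegral.integral_const_mul,
    intervalIntegral.integral_add (hint 0) (hint 2)] at h
  simpa [besselIntegral] using h

-- For `p = (m + 1) / 2` the factor `u ^ p` removes the first-order term of `besselIntegral_ode`.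
lemma hasDerivAt_deriv_rpow_mul_besselIntegral (m : ℕ) {p u : ℝ} (hp : p = ((m : ℝ) + 1) / 2)
    (hu : 0 < u) :
    HasDerivAt (fun u : ℝ => ((p * u ^ (p - 1) : ℝ) : ℂ) * besselIntegral m 0 u
        + ((u ^ p : ℝ) : ℂ) * besselIntegral m 1 u)
      (-(((u ^ p : ℝ) : ℂ) * besselIntegral m 0 u) + ((p * (p - 1) / u ^ 2 : ℝ) : ℂ)
        * (((u ^ p : ℝ) : ℂ) * besselIntegral m 0 u)) u := by
  have hpow : ∀ k : ℝ, HasDerivAt (fun u : ℝ => u ^ k) (k * u ^ (k - 1)) u := fun k =>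
    Real.hasDerivAt_rpow_const (Or.inl hu.ne')
  have h₀ := (((hpow (p - 1)).const_mul p).ofReal_comp).mul (hasDerivAt_besselIntegral m 0 u)
  have h₁ := (hpow p).ofReal_comp.mul (hasDerivAt_besselIntegral m 1 u)
  convert! h₀.add h₁ using 1
  have hpow₁ : u ^ (p - 1) = u ^ p / u := Real.rpow_sub_one hu.ne' p
  have hpow₂ : u ^ (p - 1 - 1) = u ^ p / u ^ 2 := by
    rw [Real.rpow_sub_one hu.ne', hpow₁, div_div, sq]
  have hode := besselIntegral_ode m u
  rw [show (m : ℂ) + 1 = 2 * (p : ℂ) by rw [hp]; push_cast; ring] at hode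
  have hne : (u : ℂ) ≠ 0 := by exact_mod_cast hu.ne'
  rw [hpow₁, hpow₂]
  push_cast
  field_simp
  linear_combination (-((u ^ p : ℝ) : ℂ) * (u : ℂ)) * hode

/-- The error in approximating `u ^ ((m + 1) / 2) * besselIntegral m 0 u` by the combination
`A e^{iu} + B e^{-iu}` of plane waves. -/
def besselRemainder (m : ℕ) (A B : ℂ) (u : ℝ) : ℂ :=
  ((u ^ (((m : ℝ) + 1) / 2) : ℝ) : ℂ) * besselIntegral m 0 u
    - A * Complex.exp (Complex.I * (u : ℂ)) - B * Complex.exp (Complex.I * ((-u : ℝ) : ℂ))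

lemma exists_norm_besselRemainder_le_of_one_le (m : ℕ) :
    ∃ A B : ℂ, ∃ C : ℝ, ∀ u : ℝ, 1 ≤ u → ‖besselRemainder m A B u‖ ≤ C / u := by
  set p : ℝ := ((m : ℝ) + 1) / 2 with hp
  refine exists_asymptotics_of_ode (Q := fun u => p * (p - 1) / u ^ 2) (K := |p * (p - 1)|)
    (v₁ := fun u => ((p * u ^ (p - 1) : ℝ) : ℂ) * besselIntegral m 0 u
      + ((u ^ p : ℝ) : ℂ) * besselIntegral m 1 u)
    (fun u hu => (Real.hasDerivAt_rpow_const (Or.inl (by linarith))).ofReal_comp.mul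
      (hasDerivAt_besselIntegral m 0 u))
    (fun u hu => hasDerivAt_deriv_rpow_mul_besselIntegral m hp (by linarith)) (fun u _ => ?_)
  rw [abs_div, abs_of_nonneg (sq_nonneg u)]

theorem exists_norm_besselRemainder_le (m : ℕ) :
    ∃ A B : ℂ, ∃ C : ℝ, ∀ u : ℝ, 0 < u → ‖besselRemainder m A B u‖ ≤ C * min 1 (1 / u) := by
  obtain ⟨A, B, C, hlarge⟩ := exists_norm_besselRemainder_le_of_one_le m
  refine ⟨A, B, max C (π + ‖A‖ + ‖B‖), fun u hu => ?_⟩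
  rcases le_total u 1 with h1 | h1
  · rw [min_eq_left ((one_le_div hu).2 h1), mul_one]
    have hpow : ‖((u ^ (((m : ℝ) + 1) / 2) : ℝ) : ℂ) * besselIntegral m 0 u‖ ≤ π := by
      rw [norm_mul, Complex.norm_of_nonneg (by positivity)]
      have hle := Real.rpow_le_one hu.le h1 (by positivity : 0 ≤ ((m : ℝ) + 1) / 2)
      exact (mul_le_of_le_one_left (norm_nonneg _) hle).trans (norm_besselIntegral_le_pi m 0 u)
    rw [besselRemainder]
    refine ((norm_sub_le _ _).trans (add_le_add (norm_sub_le _ _) le_rfl)).trans ?_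
    rw [norm_mul A, norm_mul B, Complex.norm_exp_I_mul_ofReal, Complex.norm_exp_I_mul_ofReal,
      mul_one, mul_one]
    exact le_max_of_le_right (by gcongr)
  · rw [min_eq_right ((div_le_one hu).2 h1), mul_one_div]
    exact (hlarge u h1).trans (by gcongr; exact le_max_left _ _)

end BesselAsymptotics

section PolarFourier

open Set

lemma integrable_iff_integrableOn_polarCoord_symm {E : Type*} [NormedAddCommGroup E]
    [NormedSpace ℝ E] {f : ℝ × ℝ → E} :
    Integrable f ↔ IntegrableOn (fun p => p.1 • f (polarCoord.symm p)) polarCoord.target := by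
  have hmeas := polarCoord.open_target.measurableSet
  rw [← integrableOn_univ, integrableOn_congr_set_ae polarCoord_source_ae_eq_univ.symm,
    ← polarCoord.symm_image_target_eq_source,
    integrableOn_image_iff_integrableOn_abs_det_fderiv_smul volume hmeas
      (fun p _ => (hasFDerivAt_polarCoord_symm p).hasFDerivWithinAt) polarCoord.symm.injOn]
  refine integrableOn_congr_fun (fun p hp => ?_) hmeas
  rw [det_fderivPolarCoordSymm, abs_of_pos hp.1]

/-- The integrand in the coordinates `(p, q) = (⟪x, ξ⟫ / ‖x‖, |ξ - p x / ‖x‖|)` of the Fourier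
integral of the radial function with profile `h`, at a point `x` of norm `r`, on `ℝ^(m + 2)`. -/
def halfPlaneIntegrand (m : ℕ) (h : ℝ → ℂ) (r : ℝ) : ℝ × ℝ → ℂ :=
  indicator {z | 0 < z.2} fun z => ((z.2 ^ m : ℝ) : ℂ) *
    (Complex.exp (Complex.I * ((r * z.1 : ℝ) : ℂ)) * h √(z.1 ^ 2 + z.2 ^ 2))

variable {m : ℕ} {h : ℝ → ℂ}

lemma smul_halfPlaneIntegrand_polarCoord_symm (m : ℕ) (h : ℝ → ℂ) (r : ℝ) {z : ℝ × ℝ}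
    (hz : z ∈ polarCoord.target) :
    z.1 • halfPlaneIntegrand m h r (polarCoord.symm z) =
      indicator (Ioi 0 ×ˢ Ioo 0 π)
        (fun z => h z.1 * ((z.1 ^ (m + 1) : ℝ) : ℂ) * besselIntegrand m 0 (r * z.1) z.2) z := by
  obtain ⟨ρ, θ⟩ := z
  obtain ⟨hρ, hθ⟩ : 0 < ρ ∧ θ ∈ Ioo (-π) π := hz
  rw [halfPlaneIntegrand, polarCoord_symm_apply]
  by_cases hpos : 0 < θ
  · have hsin : 0 < Real.sin θ := Real.sin_pos_of_pos_of_lt_pi hpos hθ.2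
    have hsqrt : √((ρ * Real.cos θ) ^ 2 + (ρ * Real.sin θ) ^ 2) = ρ := by
      rw [mul_pow, mul_pow, ← mul_add, Real.cos_sq_add_sin_sq, mul_one, Real.sqrt_sq hρ.le]
    rw [indicator_of_mem (by exact mul_pos hρ hsin), indicator_of_mem (by exact ⟨hρ, hpos, hθ.2⟩),
      hsqrt, Complex.real_smul, ← mul_assoc r, besselIntegrand]
    push_cast
    ring
  · have hsin : Real.sin θ ≤ 0 :=
      Real.sin_nonpos_of_nonpos_of_neg_pi_le (not_lt.1 hpos) hθ.1.le
    rw [indicator_of_notMem (by exact (mul_nonpos_of_nonneg_of_nonpos hρ.le hsin).not_gt),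
      indicator_of_notMem fun hmem => hpos hmem.2.1, smul_zero]

lemma integrableOn_mul_besselIntegrand
    (hh : IntegrableOn (fun ρ => h ρ * ((ρ ^ (m + 1) : ℝ) : ℂ)) (Ioi 0)) (r : ℝ) :
    IntegrableOn (fun z : ℝ × ℝ => h z.1 * ((z.1 ^ (m + 1) : ℝ) : ℂ)
      * besselIntegrand m 0 (r * z.1) z.2) (Ioi 0 ×ˢ Ioo 0 π) := by
  unfold IntegrableOn
  rw [Measure.volume_eq_prod, ← Measure.prod_restrict]
  refine (hh.comp_fst _).mul_bdd (c := 1) (Continuous.aestronglyMeasurable ?_)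
    (.of_forall fun z => norm_besselIntegrand_le_one ..)
  unfold besselIntegrand
  fun_prop

lemma integrable_halfPlaneIntegrand
    (hh : IntegrableOn (fun ρ => h ρ * ((ρ ^ (m + 1) : ℝ) : ℂ)) (Ioi 0)) (r : ℝ) :
    Integrable (halfPlaneIntegrand m h r) := by
  rw [integrable_iff_integrableOn_polarCoord_symm,
    integrableOn_congr_fun (fun z => smul_halfPlaneIntegrand_polarCoord_symm m h r)
      polarCoord.open_target.measurableSet]
  exact ((integrableOn_mul_besselIntegrand hh r).integrable_indicator
    (measurableSet_Ioi.prod measurableSet_Ioo)).integrableOn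

lemma integral_halfPlaneIntegrand
    (hh : IntegrableOn (fun ρ => h ρ * ((ρ ^ (m + 1) : ℝ) : ℂ)) (Ioi 0)) (r : ℝ) :
    ∫ z, halfPlaneIntegrand m h r z =
      ∫ ρ in Ioi (0 : ℝ), besselIntegral m 0 (r * ρ) * (h ρ * ((ρ ^ (m + 1) : ℝ) : ℂ)) := by
  have hsub : Ioi (0 : ℝ) ×ˢ Ioo 0 π ⊆ polarCoord.target :=
    prod_mono le_rfl (Ioo_subset_Ioo_left (neg_nonpos.2 Real.pi_pos.le))
  rw [← integral_comp_polarCoord_symm, setIntegral_congr_fun polarCoord.open_target.measurableSet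
    (fun z => smul_halfPlaneIntegrand_polarCoord_symm m h r),
    setIntegral_indicator (measurableSet_Ioi.prod measurableSet_Ioo), inter_eq_right.2 hsub,
    Measure.volume_eq_prod, setIntegral_prod _ (integrableOn_mul_besselIntegrand hh r)]
  refine setIntegral_congr_fun measurableSet_Ioi fun ρ _ => ?_
  rw [besselIntegral, intervalIntegral.integral_of_le Real.pi_pos.le, integral_Ioc_eq_integral_Ioo,
    mul_comm, ← integral_const_mul]

lemma integral_euclideanSpace_succ {E : Type*} [NormedAddCommGroup E] [NormedSpace ℝ E] {k : ℕ}
    {f : EuclideanSpace ℝ (Fin (k + 1)) → E} (hf : Integrable f) :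
    ∫ ξ, f ξ = ∫ p : ℝ, ∫ η : EuclideanSpace ℝ (Fin k),
      f (WithLp.toLp 2 (Fin.cons p η.ofLp)) := by
  set e := (MeasurableEquiv.piFinSuccAbove (fun _ : Fin (k + 1) => ℝ) 0).symm
  have hpres : MeasurePreserving (WithLp.toLp 2 ∘ e) :=
    (PiLp.volume_preserving_toLp (Fin (k + 1))).comp
      (volume_preserving_piFinSuccAbove (fun _ : Fin (k + 1) => ℝ) 0).symm
  have hemb : MeasurableEmbedding (WithLp.toLp 2 ∘ e) :=
    (MeasurableEquiv.toLp 2 (Fin (k + 1) → ℝ)).measurableEmbedding.comp e.measurableEmbedding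
  have hcons (p : ℝ) (η : Fin k → ℝ) : e (p, η) = Fin.cons p η := Fin.insertNth_zero' p η
  rw [← hpres.integral_comp hemb f, Measure.volume_eq_prod]
  refine (integral_prod _ ((hpres.integrable_comp_emb hemb).2 hf)).trans ?_
  congr with p
  rw [← (PiLp.volume_preserving_ofLp (Fin k)).integral_comp
    (MeasurableEquiv.toLp 2 (Fin k → ℝ)).symm.measurableEmbedding]
  simp only [Function.comp_apply, hcons]

lemma norm_toLp_cons {k : ℕ} (p : ℝ) (η : EuclideanSpace ℝ (Fin k)) :
    ‖(WithLp.toLp 2 (Fin.cons p η.ofLp) : EuclideanSpace ℝ (Fin (k + 1)))‖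
      = √(p ^ 2 + ‖η‖ ^ 2) := by
  rw [EuclideanSpace.norm_eq, EuclideanSpace.norm_eq, Real.sq_sqrt (by positivity),
    Fin.sum_univ_succ]
  simp

/-- The area of the unit sphere of `ℝ^(m + 1)`. -/
def unitSphereArea (m : ℕ) : ℝ :=
  (m + 1) * volume.real (Metric.ball (0 : EuclideanSpace ℝ (Fin (m + 1))) 1)

lemma integral_exp_inner_mul_eq_of_norm_eq {V : Type*} [NormedAddCommGroup V]
    [InnerProductSpace ℝ V] [FiniteDimensional ℝ V] [MeasurableSpace V] [BorelSpace V]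
    {g : V → ℂ} (hg : ∀ x y, ‖x‖ = ‖y‖ → g x = g y) {ξ η : V} (h : ‖ξ‖ = ‖η‖) :
    ∫ x, Complex.exp (Complex.I * ((⟪ξ, x⟫_ℝ : ℝ) : ℂ)) * g x
      = ∫ x, Complex.exp (Complex.I * ((⟪η, x⟫_ℝ : ℝ) : ℂ)) * g x := by
  set T := Submodule.reflection (ℝ ∙ (ξ - η))ᗮ
  have hT : T ξ = η := Submodule.reflection_sub h
  rw [← T.measurePreserving.integral_comp T.toHomeomorph.measurableEmbedding
    (fun x => Complex.exp (Complex.I * ((⟪η, x⟫_ℝ : ℝ) : ℂ)) * g x)]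
  congr with x
  rw [← hT, T.inner_map_map, hg (T x) x (T.norm_map x)]

lemma integrable_exp_inner_mul_norm
    (hh : IntegrableOn (fun ρ => h ρ * ((ρ ^ (m + 1) : ℝ) : ℂ)) (Ioi 0))
    (x : EuclideanSpace ℝ (Fin (m + 2))) :
    Integrable fun ξ => Complex.exp (Complex.I * ((⟪x, ξ⟫_ℝ : ℝ) : ℂ)) * h ‖ξ‖ := by
  have hint : Integrable fun ξ : EuclideanSpace ℝ (Fin (m + 2)) => h ‖ξ‖ := by
    rw [integrable_fun_norm_addHaar, finrank_euclideanSpace_fin]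
    simpa only [show m + 2 - 1 = m + 1 from rfl, Complex.real_smul,
      mul_comm] using hh
  exact hint.bdd_mul (c := 1) (Continuous.aestronglyMeasurable (by fun_prop))
    (.of_forall fun ξ => (Complex.norm_exp_I_mul_ofReal _).le)

theorem integral_exp_inner_mul_norm
    (hh : IntegrableOn (fun ρ => h ρ * ((ρ ^ (m + 1) : ℝ) : ℂ)) (Ioi 0))
    (x : EuclideanSpace ℝ (Fin (m + 2))) :
    ∫ ξ : EuclideanSpace ℝ (Fin (m + 2)), Complex.exp (Complex.I * ((⟪x, ξ⟫_ℝ : ℝ) : ℂ)) * h ‖ξ‖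
      = (unitSphereArea m : ℂ) * ∫ ρ in Ioi (0 : ℝ),
        besselIntegral m 0 (‖x‖ * ρ) * (h ρ * ((ρ ^ (m + 1) : ℝ) : ℂ)) := by
  set x₀ : EuclideanSpace ℝ (Fin (m + 2)) := EuclideanSpace.single 0 ‖x‖ with hx₀
  have hinner (p : ℝ) (η : EuclideanSpace ℝ (Fin (m + 1))) :
      ⟪x₀, (WithLp.toLp 2 (Fin.cons p η.ofLp) : EuclideanSpace ℝ (Fin (m + 2)))⟫_ℝ = ‖x‖ * p := by
    rw [hx₀, EuclideanSpace.inner_single_left]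
    simp
  rw [integral_exp_inner_mul_eq_of_norm_eq (fun y z hyz => by rw [hyz])
      (by simp [hx₀] : ‖x‖ = ‖x₀‖),
    integral_euclideanSpace_succ (integrable_exp_inner_mul_norm hh x₀),
    ← integral_halfPlaneIntegrand hh, Measure.volume_eq_prod,
    integral_prod _ (integrable_halfPlaneIntegrand hh ‖x‖), ← integral_const_mul]
  congr with p
  simp_rw [hinner, norm_toLp_cons]
  rw [integral_fun_norm_addHaar volume (fun q => Complex.exp (Complex.I * ((‖x‖ * p : ℝ) : ℂ)) *
    h √(p ^ 2 + q ^ 2)), finrank_euclideanSpace_fin, unitSphereArea,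
    show (fun q => halfPlaneIntegrand m h ‖x‖ (p, q)) = indicator (Ioi 0) fun q =>
      ((q ^ m : ℝ) : ℂ) * (Complex.exp (Complex.I * ((‖x‖ * p : ℝ) : ℂ)) * h √(p ^ 2 + q ^ 2))
      from rfl, integral_indicator measurableSet_Ioi]
  simp only [Nat.add_sub_cancel, nsmul_eq_mul, Complex.real_smul]
  push_cast
  ring

end PolarFourier

section RadialFourierTransform

open Set
open scoped SchwartzMap

variable {n : ℕ} {f : EuclideanSpace ℝ (Fin n) → ℂ}

lemma FT_eq_of_norm_eq (hf : ∀ x y : EuclideanSpace ℝ (Fin n), ‖x‖ = ‖y‖ → f x = f y)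
    {ξ η : EuclideanSpace ℝ (Fin n)} (h : ‖ξ‖ = ‖η‖) : FT n f ξ = FT n f η := by
  have hneg (ξ : EuclideanSpace ℝ (Fin n)) :
      FT n f ξ = ∫ x, Complex.exp (Complex.I * ((⟪-ξ, x⟫_ℝ : ℝ) : ℂ)) * f x := by
    simp only [FT, inner_neg_left, real_inner_comm, Complex.ofReal_neg, mul_neg]
  rw [hneg, hneg]
  exact integral_exp_inner_mul_eq_of_norm_eq hf (by rwa [norm_neg, norm_neg])

lemma FT_eq_fourier (f : EuclideanSpace ℝ (Fin n) → ℂ) (ξ : EuclideanSpace ℝ (Fin n)) :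
    FT n f ξ = FourierTransform.fourier f ((2 * π)⁻¹ • ξ) := by
  rw [Real.fourier_eq', FT]
  congr with x
  rw [inner_smul_right, smul_eq_mul]
  congr 2
  have : (π : ℂ) ≠ 0 := by exact_mod_cast Real.pi_ne_zero
  push_cast
  field_simp

lemma exists_schwartzMap_FT_eq_norm {k : ℕ} (f : 𝓢(EuclideanSpace ℝ (Fin (k + 1)), ℂ))
    (hf : ∀ x y : EuclideanSpace ℝ (Fin (k + 1)), ‖x‖ = ‖y‖ → f x = f y) :
    ∃ F : 𝓢(ℝ, ℂ), ∀ ξ, FT (k + 1) f ξ = F ‖ξ‖ := by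
  set e : EuclideanSpace ℝ (Fin (k + 1)) := EuclideanSpace.single 0 1
  set g : ℝ →L[ℝ] EuclideanSpace ℝ (Fin (k + 1)) :=
    (ContinuousLinearMap.id ℝ ℝ).smulRight ((2 * π)⁻¹ • e)
  have hpos : 0 < 2 * π := Real.two_pi_pos
  have hg : AntilipschitzWith (2 * π).toNNReal g :=
    g.antilipschitz_of_bound fun x => le_of_eq <| by
      simp [g, e, norm_smul, hpos.le, abs_of_pos Real.pi_pos, field]
  refine ⟨SchwartzMap.compCLMOfAntilipschitz ℂ g.hasTemperateGrowth hg
    (FourierTransform.fourier f), fun ξ => ?_⟩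
  have hnorm : ‖ξ‖ = ‖‖ξ‖ • e‖ := by simp [e, norm_smul]
  rw [FT_eq_of_norm_eq hf hnorm, FT_eq_fourier, SchwartzMap.compCLMOfAntilipschitz_apply,
    SchwartzMap.fourier_coe, Function.comp_apply, smul_comm]
  rfl

variable (F : 𝓢(ℝ, ℂ))

lemma integrable_smul_schwartzMap {w : ℝ → ℝ} (hw : w.HasTemperateGrowth) :
    Integrable fun ρ => w ρ • F ρ := by
  simpa only [SchwartzMap.smulLeftCLM_apply hw] using
    (SchwartzMap.smulLeftCLM ℂ w F).integrable (μ := volume)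

lemma integrable_schwartzMap_mul_pow (k : ℕ) : Integrable fun ρ => F ρ * ((ρ ^ k : ℝ) : ℂ) := by
  simpa only [Complex.real_smul, mul_comm] using
    integrable_smul_schwartzMap F (w := fun ρ => ρ ^ k) (by fun_prop)

lemma integrableOn_schwartzMap_mul_rpow {p : ℝ} (hp : 0 ≤ p) :
    IntegrableOn (fun ρ => F ρ * ((ρ ^ p : ℝ) : ℂ)) (Ioi 0) := by
  have hdom := ((F.integrable (μ := volume)).norm.add
    (integrable_schwartzMap_mul_pow F ⌈p⌉₊).norm).integrableOn (s := Ioi 0)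
  refine hdom.mono' (F.continuous.mul (Complex.continuous_ofReal.comp
    (Real.continuous_rpow_const hp))).aestronglyMeasurable ?_
  refine (ae_restrict_mem measurableSet_Ioi).mono fun ρ (hρ : 0 < ρ) => ?_
  have hpow : ρ ^ p ≤ 1 + ρ ^ ⌈p⌉₊ := by
    rcases le_total ρ 1 with hρ1 | hρ1
    · exact (Real.rpow_le_one hρ.le hρ1 hp).trans (le_add_of_nonneg_right (by positivity))
    · rw [← Real.rpow_natCast]
      exact (Real.rpow_le_rpow_of_exponent_le hρ1 (Nat.le_ceil p)).trans (by linarith)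
  rw [norm_mul, Pi.add_apply, norm_mul, Complex.norm_of_nonneg (by positivity),
    Complex.norm_of_nonneg (by positivity)]
  calc ‖F ρ‖ * ρ ^ p ≤ ‖F ρ‖ * (1 + ρ ^ ⌈p⌉₊) := by gcongr
    _ = ‖F ρ‖ + ‖F ρ‖ * ρ ^ ⌈p⌉₊ := by ring

lemma integrable_pow_mul_one_add_sq_rpow_mul_norm_sq (k : ℕ) (s : ℝ) :
    Integrable fun ρ : ℝ => ρ ^ k * ((1 + ρ ^ 2) ^ s * ‖F ρ‖ ^ 2) := by
  have hw : (fun ρ : ℝ => ρ ^ k * (1 + ρ ^ 2) ^ s).HasTemperateGrowth := by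
    have := Function.hasTemperateGrowth_one_add_norm_sq_rpow ℝ s
    simp only [Real.norm_eq_abs, sq_abs] at this
    fun_prop
  refine ((integrable_smul_schwartzMap F hw).norm.mul_bdd
    F.continuous.norm.aestronglyMeasurable (c := SchwartzMap.seminorm ℝ 0 0 F)
    (.of_forall fun ρ => ?_)).mono ?_ (.of_forall fun ρ => le_of_eq ?_)
  · rw [norm_norm]
    exact SchwartzMap.norm_le_seminorm ℝ F ρ
  · exact (hw.1.continuous.mul (F.continuous.norm.pow 2)).aestronglyMeasurable.congr
      (.of_forall fun ρ => by simp only [Pi.mul_apply, Pi.pow_apply, mul_assoc])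
  · simp only [norm_mul, norm_smul, norm_pow, norm_norm]
    ring

end RadialFourierTransform

section BesselOscillation

open Set

/-- The radial profile of the oscillatory integral: up to a constant factor, this is the value of
`Sosc (m + 2) a f x t` at `‖x‖ = r` when `F ‖ξ‖` is the Fourier transform of `f`. -/
def besselOsc (m : ℕ) (a : ℝ) (F : ℝ → ℂ) (r t : ℝ) : ℂ :=
  ∫ ρ in Ioi (0 : ℝ), besselIntegral m 0 (r * ρ) *
    (Complex.exp (Complex.I * ((t * ρ ^ a : ℝ) : ℂ)) * F ρ * ((ρ ^ (m + 1) : ℝ) : ℂ))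

/-- The function `F` times the square root of the radial density `ρ ^ (m + 1)` of `ℝ ^ (m + 2)`, so
that radial `L²` norms on `ℝ ^ (m + 2)` become `L²` norms on the half-line. -/
def halfDensity (m : ℕ) (F : ℝ → ℂ) (ρ : ℝ) : ℂ := F ρ * ((ρ ^ (((m : ℝ) + 1) / 2) : ℝ) : ℂ)

variable {m : ℕ} {a s : ℝ} {F : ℝ → ℂ}

lemma pow_succ_eq_rpow_half_mul_self (m : ℕ) {ρ : ℝ} (hρ : 0 < ρ) :
    ρ ^ (m + 1) = ρ ^ (((m : ℝ) + 1) / 2) * ρ ^ (((m : ℝ) + 1) / 2) := by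
  rw [← Real.rpow_add hρ, add_halves, ← Real.rpow_natCast, Nat.cast_add_one]

lemma continuous_halfDensity (m : ℕ) (hF : Continuous F) : Continuous (halfDensity m F) :=
  hF.mul (Complex.continuous_ofReal.comp (Real.continuous_rpow_const (by positivity)))

lemma continuous_besselRemainder (m : ℕ) (A B : ℂ) : Continuous (besselRemainder m A B) := by
  have hbessel : Continuous (besselIntegral m 0) :=
    continuous_iff_continuousAt.2 fun u => (hasDerivAt_besselIntegral m 0 u).continuousAt
  have hpow : Continuous fun u : ℝ => u ^ (((m : ℝ) + 1) / 2) :=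
    Real.continuous_rpow_const (by positivity)
  unfold besselRemainder
  fun_prop

lemma rpow_mul_besselOsc_integrand (A B : ℂ) (F : ℝ → ℂ) (a t : ℝ) {r ρ : ℝ} (hr : 0 < r)
    (hρ : 0 < ρ) :
    ((r ^ (((m : ℝ) + 1) / 2) : ℝ) : ℂ) * (besselIntegral m 0 (r * ρ) *
        (Complex.exp (Complex.I * ((t * ρ ^ a : ℝ) : ℂ)) * F ρ * ((ρ ^ (m + 1) : ℝ) : ℂ)))
      = A * (Complex.exp (Complex.I * ((r * ρ + t * ρ ^ a : ℝ) : ℂ)) * halfDensity m F ρ)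
        + B * (Complex.exp (Complex.I * ((-r * ρ + t * ρ ^ a : ℝ) : ℂ)) * halfDensity m F ρ)
        + besselRemainder m A B (r * ρ) *
          (Complex.exp (Complex.I * ((t * ρ ^ a : ℝ) : ℂ)) * halfDensity m F ρ) := by
  have hexp (y : ℝ) : Complex.exp (Complex.I * ((y * ρ + t * ρ ^ a : ℝ) : ℂ))
      = Complex.exp (Complex.I * ((y * ρ : ℝ) : ℂ)) *
        Complex.exp (Complex.I * ((t * ρ ^ a : ℝ) : ℂ)) := by
    rw [← Complex.exp_add, ← mul_add, ← Complex.ofReal_add]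
  rw [hexp, hexp, pow_succ_eq_rpow_half_mul_self m hρ, besselRemainder, halfDensity,
    Real.mul_rpow hr.le hρ.le, neg_mul]
  push_cast
  ring

lemma rpow_mul_besselOsc_eq {A B : ℂ} {K : ℝ}
    (hK : ∀ u, 0 < u → ‖besselRemainder m A B u‖ ≤ K * min 1 (1 / u))
    (hF : IntegrableOn (halfDensity m F) (Ioi 0)) {r : ℝ} (hr : 0 < r) (t : ℝ) :
    ((r ^ (((m : ℝ) + 1) / 2) : ℝ) : ℂ) * besselOsc m a F r t
      = A * osc a (Ioi 0) (halfDensity m F) r t + B * osc a (Ioi 0) (halfDensity m F) (-r) t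
        + ∫ ρ in Ioi (0 : ℝ), besselRemainder m A B (r * ρ) *
          (Complex.exp (Complex.I * ((t * ρ ^ a : ℝ) : ℂ)) * halfDensity m F ρ) := by
  have hosc (y : ℝ) := integrableOn_exp_mul a hF y t
  have hrem : IntegrableOn (fun ρ => besselRemainder m A B (r * ρ) *
      (Complex.exp (Complex.I * ((t * ρ ^ a : ℝ) : ℂ)) * halfDensity m F ρ)) (Ioi 0) := by
    have hosc₀ := hosc 0
    simp only [zero_mul, zero_add] at hosc₀
    refine hosc₀.bdd_mul (c := |K|)
      ((continuous_besselRemainder m A B).comp (by fun_prop)).aestronglyMeasurable ?_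
    refine (ae_restrict_mem measurableSet_Ioi).mono fun ρ (hρ : 0 < ρ) => ?_
    calc ‖besselRemainder m A B (r * ρ)‖ ≤ K * min 1 (1 / (r * ρ)) := hK _ (mul_pos hr hρ)
      _ ≤ |K| * 1 := mul_le_mul (le_abs_self K) (min_le_left _ _) (by positivity) (abs_nonneg K)
      _ = |K| := mul_one _
  rw [besselOsc, ← integral_const_mul, setIntegral_congr_fun measurableSet_Ioi
    fun ρ hρ => rpow_mul_besselOsc_integrand A B F a t hr hρ,
    integral_add (by exact ((hosc r).const_mul A).add ((hosc (-r)).const_mul B)) hrem,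
    integral_add ((hosc r).const_mul A) ((hosc (-r)).const_mul B),
    integral_const_mul, integral_const_mul]
  rfl

lemma rpow_mul_enorm_besselOsc_le {A B : ℂ} {K : ℝ}
    (hK : ∀ u, 0 < u → ‖besselRemainder m A B u‖ ≤ K * min 1 (1 / u))
    (hF : IntegrableOn (halfDensity m F) (Ioi 0)) {r : ℝ} (hr : 0 < r) {t : ℝ}
    (ht : t ∈ Icc (-1) 1) :
    ENNReal.ofReal (r ^ (((m : ℝ) + 1) / 2)) * ‖besselOsc m a F r t‖ₑ
      ≤ ‖A‖ₑ * maxOsc a 1 (Ioi 0) (halfDensity m F) r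
        + ‖B‖ₑ * maxOsc a 1 (Ioi 0) (halfDensity m F) (-r)
        + ENNReal.ofReal K * ∫⁻ ρ in Ioi (0 : ℝ),
          ENNReal.ofReal (min 1 (1 / (r * ρ))) * ‖halfDensity m F ρ‖ₑ := by
  have hrem : ‖∫ ρ in Ioi (0 : ℝ), besselRemainder m A B (r * ρ) *
        (Complex.exp (Complex.I * ((t * ρ ^ a : ℝ) : ℂ)) * halfDensity m F ρ)‖ₑ
      ≤ ENNReal.ofReal K * ∫⁻ ρ in Ioi (0 : ℝ),
          ENNReal.ofReal (min 1 (1 / (r * ρ))) * ‖halfDensity m F ρ‖ₑ := by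
    rw [← lintegral_const_mul' _ _ ENNReal.ofReal_ne_top]
    refine (enorm_integral_le_lintegral_enorm _).trans
      (setLIntegral_mono' measurableSet_Ioi fun ρ (hρ : 0 < ρ) => ?_)
    have hmin : 0 ≤ min 1 (1 / (r * ρ)) := by positivity
    rw [enorm_mul, enorm_mul, ← ofReal_norm (Complex.exp _), Complex.norm_exp_I_mul_ofReal,
      ENNReal.ofReal_one, one_mul, ← mul_assoc, ← ENNReal.ofReal_mul' hmin, ← ofReal_norm]
    gcongr
    exact hK _ (mul_pos hr hρ)
  have hosc (y : ℝ) := enorm_osc_le_maxOsc a (Ioi 0) (halfDensity m F) y ht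
  calc ENNReal.ofReal (r ^ (((m : ℝ) + 1) / 2)) * ‖besselOsc m a F r t‖ₑ
      = ‖((r ^ (((m : ℝ) + 1) / 2) : ℝ) : ℂ) * besselOsc m a F r t‖ₑ := by
        rw [enorm_mul, ← ofReal_norm (Complex.ofReal _), Complex.norm_of_nonneg (by positivity)]
    _ ≤ _ := by
        rw [rpow_mul_besselOsc_eq hK hF hr]
        refine (enorm_add_le _ _).trans (add_le_add ((enorm_add_le _ _).trans ?_) hrem)
        rw [enorm_mul, enorm_mul]
        gcongr
        exacts [hosc r, hosc (-r)]

lemma setLIntegral_sq_le_of_le_add {S : Set ℝ} (hS : MeasurableSet S) {c₁ c₂ c₃ : ℝ≥0}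
    {φ f g h : ℝ → ℝ≥0∞} (hf : Measurable f) (hg : Measurable g)
    (hφ : ∀ r ∈ S, φ r ≤ c₁ * f r + c₂ * g r + c₃ * h r) :
    ∫⁻ r in S, φ r ^ 2 ≤ 4 * c₁ ^ 2 * (∫⁻ r in S, f r ^ 2) + 4 * c₂ ^ 2 * (∫⁻ r in S, g r ^ 2)
      + 2 * c₃ ^ 2 * ∫⁻ r in S, h r ^ 2 := by
  have hsq (r : ℝ) (hr : r ∈ S) :
      φ r ^ 2 ≤ 4 * c₁ ^ 2 * f r ^ 2 + 4 * c₂ ^ 2 * g r ^ 2 + 2 * c₃ ^ 2 * h r ^ 2 :=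
    calc φ r ^ 2 ≤ (c₁ * f r + c₂ * g r + c₃ * h r) ^ 2 := by gcongr; exact hφ r hr
      _ ≤ 2 * (2 * ((c₁ * f r) ^ 2 + (c₂ * g r) ^ 2) + (c₃ * h r) ^ 2) :=
          (ennreal_add_sq_le _ _).trans (by gcongr; exact ennreal_add_sq_le _ _)
      _ = _ := by ring
  refine (setLIntegral_mono' hS hsq).trans_eq ?_
  rw [lintegral_add_left (by fun_prop), lintegral_add_left (by fun_prop),
    lintegral_const_mul _ (by fun_prop), lintegral_const_mul _ (by fun_prop),
    lintegral_const_mul' _ _ (by finiteness)]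

theorem exists_lintegral_iSup_besselOsc_sq_le (m : ℕ) (ha : 0 < a) (ha1 : a ≠ 1)
    (hs : a / 4 < s) :
    ∃ C : ℝ≥0, ∀ F : ℝ → ℂ, Continuous F → IntegrableOn (halfDensity m F) (Ioi 0) →
      ∫⁻ r in Ioi (0 : ℝ), (ENNReal.ofReal (r ^ (((m : ℝ) + 1) / 2)) *
          ⨆ t : Icc (-1 : ℝ) 1, ‖besselOsc m a F r t‖ₑ) ^ 2
        ≤ C * ∫⁻ ρ in Ioi (0 : ℝ),
          ENNReal.ofReal ((1 + ρ ^ 2) ^ s) * ‖halfDensity m F ρ‖ₑ ^ 2 := by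
  obtain ⟨A, B, K, hK⟩ := exists_norm_besselRemainder_le m
  obtain ⟨C, hmax⟩ := exists_lintegral_maxOsc_Ioi_zero_le ha ha1 hs
  refine ⟨4 * ‖A‖₊ ^ 2 * C + 4 * ‖B‖₊ ^ 2 * C + 2 * K.toNNReal ^ 2 * 16, fun F hF hFi => ?_⟩
  set G := halfDensity m F
  have hG : Continuous G := continuous_halfDensity m hF
  set M := maxOsc a 1 (Ioi 0) G
  set H : ℝ → ℝ≥0∞ := fun r => ∫⁻ ρ in Ioi (0 : ℝ), ENNReal.ofReal (min 1 (1 / (r * ρ))) * ‖G ρ‖ₑ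
  set E := ∫⁻ ρ in Ioi (0 : ℝ), ENNReal.ofReal ((1 + ρ ^ 2) ^ s) * ‖G ρ‖ₑ ^ 2
  have hMm : Measurable M := measurable_maxOsc a 1 hFi
  have hM : ∫⁻ r in Ioi (0 : ℝ), M r ^ 2 ≤ C * E :=
    (setLIntegral_le_lintegral _ _).trans (hmax G hG hFi)
  have hMneg : ∫⁻ r in Ioi (0 : ℝ), M (-r) ^ 2 ≤ C * E := by
    refine (setLIntegral_le_lintegral _ _).trans ?_
    rw [lintegral_neg_eq_self (fun r => M r ^ 2)]
    exact hmax G hG hFi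
  have hH : ∫⁻ r in Ioi (0 : ℝ), H r ^ 2 ≤ 16 * E := by
    refine (setLIntegral_sq_setLIntegral_min_one_mul_le hG.enorm.measurable).trans ?_
    refine mul_le_mul_right (lintegral_mono fun ρ => ?_) 16
    refine le_mul_of_one_le_left zero_le (ENNReal.one_le_ofReal.2 ?_)
    exact Real.one_le_rpow (le_add_of_nonneg_right (sq_nonneg ρ)) (by linarith)
  have hpt : ∀ r ∈ Ioi (0 : ℝ), ENNReal.ofReal (r ^ (((m : ℝ) + 1) / 2)) *
        ⨆ t : Icc (-1 : ℝ) 1, ‖besselOsc m a F r t‖ₑ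
      ≤ ‖A‖₊ * M r + ‖B‖₊ * M (-r) + K.toNNReal * H r := fun r hr => by
    rw [ENNReal.mul_iSup]
    exact iSup_le fun t => rpow_mul_enorm_besselOsc_le hK hFi hr t.2
  calc _ ≤ 4 * ‖A‖₊ ^ 2 * (∫⁻ r in Ioi (0 : ℝ), M r ^ 2)
        + 4 * ‖B‖₊ ^ 2 * (∫⁻ r in Ioi (0 : ℝ), M (-r) ^ 2)
        + 2 * K.toNNReal ^ 2 * ∫⁻ r in Ioi (0 : ℝ), H r ^ 2 :=
        setLIntegral_sq_le_of_le_add measurableSet_Ioi hMm (hMm.comp measurable_neg) hpt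
    _ ≤ 4 * ‖A‖₊ ^ 2 * (C * E) + 4 * ‖B‖₊ ^ 2 * (C * E) + 2 * K.toNNReal ^ 2 * (16 * E) := by
        gcongr
    _ = _ := by
        push_cast
        ring

end BesselOscillation

section RadialOscillation

open Set
open scoped SchwartzMap

variable {m : ℕ} {a s : ℝ} {F : ℝ → ℂ}

lemma Sosc_eq_besselOsc {f : EuclideanSpace ℝ (Fin (m + 2)) → ℂ}
    (hf : ∀ ξ, FT (m + 2) f ξ = F ‖ξ‖)
    (hF : IntegrableOn (fun ρ => F ρ * ((ρ ^ (m + 1) : ℝ) : ℂ)) (Ioi 0)) (a : ℝ)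
    (x : EuclideanSpace ℝ (Fin (m + 2))) (t : ℝ) :
    Sosc (m + 2) a f x t
      = ((((2 * π) ^ (m + 2))⁻¹ * unitSphereArea m : ℝ) : ℂ) * besselOsc m a F ‖x‖ t := by
  have hint : IntegrableOn (fun ρ => Complex.exp (Complex.I * ((t * ρ ^ a : ℝ) : ℂ)) * F ρ *
      ((ρ ^ (m + 1) : ℝ) : ℂ)) (Ioi 0) := by
    have hosc := integrableOn_exp_mul a hF 0 t
    simpa only [zero_mul, zero_add, mul_assoc] using hosc
  rw [Complex.ofReal_mul, Complex.ofReal_inv, mul_assoc, besselOsc,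
    ← integral_exp_inner_mul_norm
      (h := fun ρ => Complex.exp (Complex.I * ((t * ρ ^ a : ℝ) : ℂ)) * F ρ) hint x, Sosc]
  congr with ξ
  rw [hf, ← mul_assoc, ← Complex.exp_add, Complex.ofReal_add, mul_add]

lemma ofReal_integral_le_lintegral_ofReal {α : Type*} {mα : MeasurableSpace α} {μ : Measure α}
    (g : α → ℝ) : ENNReal.ofReal (∫ x, g x ∂μ) ≤ ∫⁻ x, ENNReal.ofReal (g x) ∂μ := by
  by_cases hg : Integrable g μ
  · rw [integral_eq_lintegral_pos_part_sub_lintegral_neg_part hg]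
    exact ENNReal.ofReal_le_of_le_toReal (sub_le_self _ ENNReal.toReal_nonneg)
  · rw [integral_undef hg, ENNReal.ofReal_zero]
    exact zero_le

lemma ofReal_iSup_norm_le {ι E : Type*} [Nonempty ι] [SeminormedAddGroup E] {g : ι → E}
    {B : ℝ≥0∞} (h : ∀ i, ‖g i‖ₑ ≤ B) : ENNReal.ofReal (⨆ i, ‖g i‖) ≤ B := by
  rcases eq_or_ne B ⊤ with rfl | hB
  · exact le_top
  · refine ENNReal.ofReal_le_of_le_toReal (ciSup_le fun i => ?_)
    rw [← toReal_enorm]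
    exact ENNReal.toReal_mono hB (h i)

lemma ofReal_pow_succ_mul_sq (m : ℕ) {r M : ℝ} (hr : 0 < r) :
    ENNReal.ofReal (r ^ (m + 1) * M ^ 2)
      = (ENNReal.ofReal (r ^ (((m : ℝ) + 1) / 2)) * ENNReal.ofReal |M|) ^ 2 := by
  rw [← ENNReal.ofReal_mul (by positivity), ← ENNReal.ofReal_pow (by positivity), mul_pow, sq_abs,
    pow_succ_eq_rpow_half_mul_self m hr, ← sq]

lemma ofReal_pow_mul_norm_sq_eq (m : ℕ) (F : ℝ → ℂ) {w ρ : ℝ} (hw : 0 ≤ w) (hρ : 0 < ρ) :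
    ENNReal.ofReal (ρ ^ (m + 1) * (w * ‖F ρ‖ ^ 2))
      = ENNReal.ofReal w * ‖halfDensity m F ρ‖ₑ ^ 2 := by
  rw [mul_left_comm, ENNReal.ofReal_mul hw, ofReal_pow_succ_mul_sq m hρ, halfDensity, enorm_mul,
    abs_norm, ofReal_norm, ← ofReal_norm (Complex.ofReal _),
    Complex.norm_of_nonneg (by positivity), mul_comm ‖F ρ‖ₑ]

lemma exists_setIntegral_iSup_besselOsc_sq_le (m : ℕ) (ha : 0 < a) (ha1 : a ≠ 1)
    (hs : a / 4 < s) :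
    ∃ C : ℝ≥0, ∀ F : 𝓢(ℝ, ℂ),
      ∫ r in Ioi (0 : ℝ), r ^ (m + 1) * (⨆ t : Ioo (-1 : ℝ) 1, ‖besselOsc m a F r t‖) ^ 2
        ≤ C * ∫ ρ in Ioi (0 : ℝ), ρ ^ (m + 1) * ((1 + ρ ^ 2) ^ s * ‖F ρ‖ ^ 2) := by
  obtain ⟨C, hC⟩ := exists_lintegral_iSup_besselOsc_sq_le m ha ha1 hs
  refine ⟨C, fun F => ?_⟩
  have hne : Nonempty (Ioo (-1 : ℝ) 1) := ⟨0, by norm_num⟩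
  have henergy : ENNReal.ofReal (∫ ρ in Ioi (0 : ℝ), ρ ^ (m + 1) * ((1 + ρ ^ 2) ^ s * ‖F ρ‖ ^ 2))
      = ∫⁻ ρ in Ioi (0 : ℝ), ENNReal.ofReal ((1 + ρ ^ 2) ^ s) * ‖halfDensity m F ρ‖ₑ ^ 2 := by
    rw [ofReal_integral_eq_lintegral_ofReal
      (integrable_pow_mul_one_add_sq_rpow_mul_norm_sq F (m + 1) s).integrableOn]
    · exact setLIntegral_congr_fun measurableSet_Ioi fun ρ hρ =>
        ofReal_pow_mul_norm_sq_eq m F (by positivity) hρ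
    · refine (ae_restrict_mem measurableSet_Ioi).mono fun ρ (hρ : 0 < ρ) => ?_
      simp only [Pi.zero_apply]
      positivity
  have hnonneg : 0 ≤ ∫ ρ in Ioi (0 : ℝ), ρ ^ (m + 1) * ((1 + ρ ^ 2) ^ s * ‖F ρ‖ ^ 2) :=
    setIntegral_nonneg measurableSet_Ioi fun ρ (hρ : 0 < ρ) => by positivity
  rw [← ENNReal.ofReal_le_ofReal_iff (by positivity), ENNReal.ofReal_mul C.coe_nonneg, henergy,
    ENNReal.ofReal_coe_nnreal]
  refine ((ofReal_integral_le_lintegral_ofReal _).trans ?_).trans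
    (hC F F.continuous (integrableOn_schwartzMap_mul_rpow F (by positivity)))
  refine setLIntegral_mono' measurableSet_Ioi fun r hr => ?_
  rw [ofReal_pow_succ_mul_sq m hr, abs_of_nonneg (Real.iSup_nonneg fun _ => norm_nonneg _)]
  gcongr
  exact ofReal_iSup_norm_le fun t => le_iSup (fun t : Icc (-1 : ℝ) 1 => ‖besselOsc m a F r t‖ₑ)
    ⟨t, Ioo_subset_Icc_self t.2⟩

lemma exists_integral_iSup_Sosc_sq_le (m : ℕ) (ha : 0 < a) (ha1 : a ≠ 1) (hs : a / 4 < s) :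
    ∃ C : ℝ≥0, ∀ f : 𝓢(EuclideanSpace ℝ (Fin (m + 2)), ℂ),
      (∀ x y : EuclideanSpace ℝ (Fin (m + 2)), ‖x‖ = ‖y‖ → f x = f y) →
      ∫ x, (⨆ t : Ioo (-1 : ℝ) 1, ‖Sosc (m + 2) a f x t‖) ^ 2
        ≤ C * ∫ ξ, (1 + ‖ξ‖ ^ 2) ^ s * ‖FT (m + 2) f ξ‖ ^ 2 := by
  obtain ⟨C, hC⟩ := exists_setIntegral_iSup_besselOsc_sq_le m ha ha1 hs
  set b : ℝ := ((2 * π) ^ (m + 2))⁻¹ * unitSphereArea m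
  refine ⟨‖b‖₊ ^ 2 * C, fun f hf => ?_⟩
  obtain ⟨F, hF⟩ := exists_schwartzMap_FT_eq_norm f hf
  have hsup (x : EuclideanSpace ℝ (Fin (m + 2))) :
      ⨆ t : Ioo (-1 : ℝ) 1, ‖Sosc (m + 2) a f x t‖
        = ‖b‖ * ⨆ t : Ioo (-1 : ℝ) 1, ‖besselOsc m a F ‖x‖ t‖ := by
    simp only [Real.mul_iSup_of_nonneg (norm_nonneg b), Sosc_eq_besselOsc hF
      (integrable_schwartzMap_mul_pow F (m + 1)).integrableOn, Complex.norm_mul,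
      Complex.norm_real, b]
  have hmain := hC F
  set M : ℝ → ℝ := fun r => ⨆ t : Ioo (-1 : ℝ) 1, ‖besselOsc m a F r t‖
  simp only [hsup, hF, mul_pow, integral_const_mul, NNReal.coe_mul, NNReal.coe_pow, coe_nnnorm,
    mul_assoc]
  refine mul_le_mul_of_nonneg_left ?_ (by positivity)
  set V := (volume : Measure (EuclideanSpace ℝ (Fin (m + 2)))).real (Metric.ball 0 1)
  set R := ∫ ρ in Ioi (0 : ℝ), ρ ^ (m + 1) * ((1 + ρ ^ 2) ^ s * ‖F ρ‖ ^ 2)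
  rw [integral_fun_norm_addHaar volume (fun r => M r ^ 2),
    integral_fun_norm_addHaar volume (fun r => (1 + r ^ 2) ^ s * ‖F r‖ ^ 2),
    finrank_euclideanSpace_fin]
  simp only [nsmul_eq_mul, smul_eq_mul, show m + 2 - 1 = m + 1 from rfl]
  calc _ ≤ ((m + 2 : ℕ) : ℝ) * (V * (C * R)) := by gcongr
    _ = _ := by ring

theorem stmt0_general (a : ℝ) (ha : 0 < a) (ha1 : a ≠ 1) (n : ℕ) (hn : 2 ≤ n)
    (s : ℝ) (hs : a / 4 < s) :
    ∃ C > 0, ∀ f : 𝓢(EuclideanSpace ℝ (Fin n), ℂ),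
      (∀ x y : EuclideanSpace ℝ (Fin n), ‖x‖ = ‖y‖ → f x = f y) →
      (∫ x, (⨆ t : Set.Ioo (-1 : ℝ) 1, ‖Sosc n a f x t‖) ^ 2) ^ (1/2 : ℝ)
        ≤ C * (∫ ξ, (1 + ‖ξ‖ ^ 2) ^ s * ‖FT n f ξ‖ ^ 2) ^ (1/2 : ℝ) := by
  obtain ⟨m, rfl⟩ := Nat.exists_eq_add_of_le' hn
  obtain ⟨C, hC⟩ := exists_integral_iSup_Sosc_sq_le m ha ha1 hs
  refine ⟨((C : ℝ) + 1) ^ (1 / 2 : ℝ), by positivity, fun f hf => ?_⟩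
  have henergy : 0 ≤ ∫ ξ, (1 + ‖ξ‖ ^ 2) ^ s * ‖FT (m + 2) f ξ‖ ^ 2 :=
    integral_nonneg fun ξ => by positivity
  rw [← Real.mul_rpow (by positivity) henergy]
  gcongr
  exact (hC f hf).trans (by gcongr; linarith)

end RadialOscillation

theorem stmt0 (a : ℝ) (ha : 0 < a) (ha1 : a ≠ 1) (n : ℕ) (hn : 2 ≤ n)
    (s : ℝ) (hs : a / 4 < s) :
    ∃ C > 0, ∀ f : EuclideanSpace ℝ (Fin n) → ℂ,
      ContDiff ℝ (⊤ : ℕ∞) f → HasCompactSupport f → 0 ∉ tsupport f →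
      (∀ x y : EuclideanSpace ℝ (Fin n), ‖x‖ = ‖y‖ → f x = f y) →
      (∫ x, (⨆ t : Set.Ioo (-1 : ℝ) 1, ‖Sosc n a f x t‖) ^ 2) ^ (1/2 : ℝ)
        ≤ C * (∫ ξ, (1 + ‖ξ‖ ^ 2) ^ s * ‖FT n f ξ‖ ^ 2) ^ (1/2 : ℝ) := by
  obtain ⟨C, hC, h⟩ := stmt0_general a ha ha1 n hn s hs
  exact ⟨C, hC, fun f hf hfc _ => h (hfc.toSchwartzMap hf)⟩
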